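/- Compatibility of the volume constraint (recovery sequence under an exact discrete volume constraint): Let L > 0, σ ∈ (0,1), and let (k_n) be integers with 0 ≤ k_n ≤ ⌊Ln²⌋ and k_n/(Ln²) → σ. Let v : ℝ → ℝ satisfy 0 ≤ v(x) ≤ 1 for all x ∈ (0,L), have finite pointwise total variation on (0,L), and ∫_{(0,L)} v dλ = σL. Then there exist u_n ∈ A_n(L,k_n) (for all n large enough) whose associated step functions converge weakly-* in L^∞(0,L) to v and such that limsup_{n→∞} F_n^L(u_n) ≤ 2·λ({x ∈ (0,L) : 0 < v(x) < 1}) + Var(v;(0,L)). -/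

import Mathlib

open MeasureTheory Filter Set
open scoped ENNReal Classical

noncomputable section

/-- `AdmDisc L n k u` : `u` belongs to `A_n(L,k)`, i.e. `u` takes the values `0,1` on
`{1,…,⌊Ln²⌋}`, exactly `k` of those indices carry the value `1`, and `u` vanishes
outside `{1,…,⌊Ln²⌋}` (extension by `0`). -/
def AdmDisc (L : ℝ) (n k : ℕ) (u : ℕ → ℝ) : Prop :=
  (∀ i ∈ Finset.Icc 1 (Nat.floor (L * (n : ℝ) ^ 2)), u i = 0 ∨ u i = 1) ∧
  (∀ i, i ∉ Finset.Icc 1 (Nat.floor (L * (n : ℝ) ^ 2)) → u i = 0) ∧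
  ((Finset.Icc 1 (Nat.floor (L * (n : ℝ) ^ 2))).filter fun i => u i = 1).card = k

/-- The discrete energy `F_n^L(u) = (1/n)·Σ (u_i − u_j)²`, the sum running over the
(unordered) pairs `{i,j} ⊆ {1,…,⌊Ln²⌋}` with `|i−j| = 1` or `|i−j| = n`. -/
def energyL (L : ℝ) (n : ℕ) (u : ℕ → ℝ) : ℝ :=
  (1 / (n : ℝ)) *
    ∑ p ∈ (Finset.Icc 1 (Nat.floor (L * (n : ℝ) ^ 2)) ×ˢ
        Finset.Icc 1 (Nat.floor (L * (n : ℝ) ^ 2))).filter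
        (fun p => p.1 < p.2 ∧ (p.2 - p.1 = 1 ∨ p.2 - p.1 = n)),
      (u p.1 - u p.2) ^ 2

/-- The step function associated with a discrete spin function: `x ↦ u_i` for
`x ∈ ((i−1)/n², i/n²]`. -/
def stepFun (n : ℕ) (u : ℕ → ℝ) : ℝ → ℝ := fun x => u (⌈(n : ℝ) ^ 2 * x⌉.toNat)

/-- Weak-* convergence in `L^∞(I)`: `∫_I v_n g → ∫_I w g` for every integrable `g` on `I`. -/
def WeakStarTo (I : Set ℝ) (v : ℕ → ℝ → ℝ) (w : ℝ → ℝ) : Prop :=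
  ∀ g : ℝ → ℝ, IntegrableOn g I volume →
    Tendsto (fun n => ∫ x in I, v n x * g x) atTop (nhds (∫ x in I, w x * g x))

/-- untruncated row configuration -/
def rowSpin (n : ℕ) (m : ℕ → ℕ) (j : ℕ) : ℝ := if j % n < m (j / n) then 1 else 0

/-- truncated row configuration, indices from 1 -/
def spinOf (n M : ℕ) (m : ℕ → ℕ) (i : ℕ) : ℝ :=
  if 1 ≤ i ∧ i ≤ M then rowSpin n m (i - 1) else 0

/-- cost of row counts -/
def rowCost (n N : ℕ) (m : ℕ → ℕ) : ℝ :=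
  ∑ r ∈ Finset.range N, (2 * (if 0 < m r ∧ m r < n then (1:ℝ) else 0)
    + (if m r ≠ m (r + 1) then (1:ℝ) else 0) + |(m r : ℝ) - m (r + 1)|)

lemma sum_rows (n N : ℕ) (f : ℕ → ℝ) :
    ∑ j ∈ Finset.range (N * n), f j
      = ∑ r ∈ Finset.range N, ∑ c ∈ Finset.range n, f (r * n + c) := by
  induction N with
  | zero => simp
  | succ N ih => rw [Nat.succ_mul, Finset.sum_range_add, ih, Finset.sum_range_succ]

lemma rowSpin_row (n : ℕ) (m : ℕ → ℕ) (r c : ℕ) (hc : c < n) :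
    rowSpin n m (r * n + c) = if c < m r then 1 else 0 := by
  have h1 : (r * n + c) % n = c := by
    rw [add_comm, Nat.add_mul_mod_self_right, Nat.mod_eq_of_lt hc]
  have h2 : (r * n + c) / n = r := by
    rw [add_comm, Nat.add_mul_div_right _ _ (by omega), Nat.div_eq_of_lt hc, zero_add]
  rw [rowSpin, h1, h2]

lemma sum_lt_indicator (n a : ℕ) (h : a ≤ n) :
    ∑ c ∈ Finset.range n, (if c < a then (1:ℝ) else 0) = a := by
  rw [← Finset.sum_filter]
  have : (Finset.range n).filter (fun c => c < a) = Finset.range a := by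
    ext c; simp; omega
  rw [this]; simp

lemma sum_sq_diff (n a b : ℕ) (ha : a ≤ n) (hb : b ≤ n) :
    ∑ c ∈ Finset.range n, ((if c < a then (1:ℝ) else 0) - (if c < b then 1 else 0)) ^ 2
      ≤ |(a:ℝ) - b| := by
  wlog hab : a ≤ b generalizing a b with H
  · have := H b a hb ha (by omega)
    rw [abs_sub_comm]
    refine le_trans (le_of_eq ?_) this
    exact Finset.sum_congr rfl (fun c _ => by ring)
  · have h1 : ∀ c ∈ Finset.range n,
        ((if c < a then (1:ℝ) else 0) - (if c < b then 1 else 0)) ^ 2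
          = (if c < b then (1:ℝ) else 0) - (if c < a then (1:ℝ) else 0) := by
      intro c _
      split_ifs <;> first | omega | norm_num
    rw [Finset.sum_congr rfl h1, Finset.sum_sub_distrib, sum_lt_indicator n a ha,
      sum_lt_indicator n b hb, abs_sub_comm]
    exact le_abs_self _

lemma nn_row (n : ℕ) (hn : 1 ≤ n) (m : ℕ → ℕ) (hm : ∀ r, m r ≤ n) (r : ℕ) :
    ∑ c ∈ Finset.range n, (rowSpin n m (r * n + c) - rowSpin n m (r * n + c + 1)) ^ 2
      ≤ 2 * (if 0 < m r ∧ m r < n then (1:ℝ) else 0)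
        + (if m r ≠ m (r + 1) then (1:ℝ) else 0) := by
  obtain ⟨k, rfl⟩ : ∃ k, n = k + 1 := ⟨n - 1, by omega⟩
  rw [Finset.sum_range_succ]
  have hlast : (rowSpin (k+1) m (r * (k+1) + k) - rowSpin (k+1) m (r * (k+1) + k + 1)) ^ 2
      ≤ (if 0 < m r ∧ m r < k + 1 then (1:ℝ) else 0)
        + (if m r ≠ m (r + 1) then (1:ℝ) else 0) := by
    have e : r * (k+1) + k + 1 = (r + 1) * (k + 1) + 0 := by ring
    rw [e, rowSpin_row _ _ _ _ (by omega), rowSpin_row _ _ _ _ (by omega)]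
    have := hm r
    have := hm (r+1)
    split_ifs <;> first | omega | norm_num
  have hin : ∑ c ∈ Finset.range k,
      (rowSpin (k+1) m (r * (k+1) + c) - rowSpin (k+1) m (r * (k+1) + c + 1)) ^ 2
      ≤ (if 0 < m r ∧ m r < k + 1 then (1:ℝ) else 0) := by
    have h1 : ∀ c ∈ Finset.range k,
        (rowSpin (k+1) m (r * (k+1) + c) - rowSpin (k+1) m (r * (k+1) + c + 1)) ^ 2
          = if c + 1 = m r then (1:ℝ) else 0 := by
      intro c hc
      have hc := Finset.mem_range.1 hc
      rw [add_assoc, rowSpin_row _ _ _ _ (by omega), rowSpin_row _ _ _ _ (by omega)]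
      split_ifs <;> first | omega | norm_num
    rw [Finset.sum_congr rfl h1]
    by_cases h : 0 < m r ∧ m r < k + 1
    · rw [if_pos h]
      have : ∀ c, (c + 1 = m r) = (m r - 1 = c) := by
        intro c; apply propext; omega
      simp only [this]
      rw [Finset.sum_ite_eq]
      split_ifs <;> norm_num
    · rw [if_neg h]
      apply le_of_eq
      apply Finset.sum_eq_zero
      intro c hc
      have hc := Finset.mem_range.1 hc
      rw [if_neg]
      have := hm r
      omega
  linarith

lemma energy_le_cost (L : ℝ) (n : ℕ) (hn : 1 ≤ n) (m : ℕ → ℕ) (hm : ∀ r, m r ≤ n) :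
    energyL L n (spinOf n (Nat.floor (L * (n : ℝ) ^ 2)) m)
      ≤ (1 / (n:ℝ)) * rowCost n (Nat.floor (L * (n : ℝ) ^ 2) / n + 1) m := by
  unfold energyL
  generalize Nat.floor (L * (n : ℝ) ^ 2) = M
  apply mul_le_mul_of_nonneg_left _ (by positivity)
  set N := M / n + 1 with hN
  have hMN : M < N * n := by
    have := Nat.lt_div_mul_add (a := M) (b := n) (by omega)
    rw [hN, Nat.succ_mul]; omega
  set F : ℕ × ℕ → ℝ := fun p => (rowSpin n m (p.1 - 1) - rowSpin n m (p.2 - 1)) ^ 2 with hF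
  set I1 := (Finset.range (N * n)).image (fun j => ((j + 1, j + 2) : ℕ × ℕ)) with hI1
  set I2 := (Finset.range (N * n)).image (fun j => ((j + 1, j + n + 1) : ℕ × ℕ)) with hI2
  have hnn : ∀ p, 0 ≤ F p := fun p => sq_nonneg _
  have s1 : ∑ p ∈ (Finset.Icc 1 M ×ˢ Finset.Icc 1 M).filter
        (fun p => p.1 < p.2 ∧ (p.2 - p.1 = 1 ∨ p.2 - p.1 = n)),
      (spinOf n M m p.1 - spinOf n M m p.2) ^ 2 ≤ ∑ p ∈ I1 ∪ I2, F p := by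
    refine le_trans (le_of_eq ?_) (Finset.sum_le_sum_of_subset_of_nonneg
      (s := (Finset.Icc 1 M ×ˢ Finset.Icc 1 M).filter
        (fun p => p.1 < p.2 ∧ (p.2 - p.1 = 1 ∨ p.2 - p.1 = n))) ?_ (fun p _ _ => hnn p))
    · apply Finset.sum_congr rfl
      rintro ⟨a, b⟩ hp
      simp only [Finset.mem_filter, Finset.mem_product, Finset.mem_Icc] at hp
      simp only [spinOf, hF, hp.1.1, hp.1.2, and_self, if_true]
    · rintro ⟨a, b⟩ hp
      simp only [Finset.mem_filter, Finset.mem_product, Finset.mem_Icc] at hp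
      rw [Finset.mem_union, hI1, hI2, Finset.mem_image, Finset.mem_image]
      rcases hp.2.2 with h | h
      · left
        exact ⟨a - 1, Finset.mem_range.2 (by omega), Prod.ext (by simp; omega) (by simp; omega)⟩
      · right
        exact ⟨a - 1, Finset.mem_range.2 (by omega), Prod.ext (by simp; omega) (by simp; omega)⟩
  have s2 : ∑ p ∈ I1 ∪ I2, F p ≤ ∑ p ∈ I1, F p + ∑ p ∈ I2, F p := by
    rw [← Finset.sum_union_inter]
    have : 0 ≤ ∑ p ∈ I1 ∩ I2, F p := Finset.sum_nonneg (fun p _ => hnn p)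
    linarith
  have e1 : ∑ p ∈ I1, F p = ∑ j ∈ Finset.range (N * n),
      (rowSpin n m j - rowSpin n m (j + 1)) ^ 2 := by
    rw [hI1, Finset.sum_image]
    · rfl
    · intro a _ b _ h
      simpa using congrArg Prod.fst h
  have e2 : ∑ p ∈ I2, F p = ∑ j ∈ Finset.range (N * n),
      (rowSpin n m j - rowSpin n m (j + n)) ^ 2 := by
    rw [hI2, Finset.sum_image]
    · rfl
    · intro a _ b _ h
      simpa using congrArg Prod.fst h
  refine s1.trans (s2.trans ?_)
  rw [e1, e2, sum_rows, sum_rows, rowCost, ← Finset.sum_add_distrib]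
  apply Finset.sum_le_sum
  intro r _
  apply add_le_add (nn_row n hn m hm r)
  refine le_trans (le_of_eq ?_) (sum_sq_diff n _ _ (hm r) (hm (r+1)))
  apply Finset.sum_congr rfl
  intro c hc
  have hc := Finset.mem_range.1 hc
  have e : r * n + c + n = (r + 1) * n + c := by ring
  rw [e, rowSpin_row _ _ _ _ hc, rowSpin_row _ _ _ _ hc]

/-- number of ones -/
def onesOf (n M : ℕ) (m : ℕ → ℕ) : ℕ :=
  ((Finset.range M).filter fun j => j % n < m (j / n)).card

lemma onesOf_eq (n M : ℕ) (m : ℕ → ℕ) (hm : ∀ r, m r ≤ n) :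
    (onesOf n M m : ℝ) = ∑ r ∈ Finset.range (M / n), (m r : ℝ) +
      ∑ c ∈ Finset.range (M % n), rowSpin n m (M / n * n + c) := by
  have h : (onesOf n M m : ℝ) = ∑ j ∈ Finset.range M, rowSpin n m j := by
    simp only [onesOf, rowSpin]
    rw [Finset.sum_boole]
  have hM : M = M / n * n + M % n := by rw [mul_comm]; exact (Nat.div_add_mod M n).symm
  rw [h]
  conv_lhs => rw [hM]
  rw [Finset.sum_range_add, sum_rows]
  congr 1
  apply Finset.sum_congr rfl
  intro r _
  rw [← sum_lt_indicator n (m r) (hm r)]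
  exact Finset.sum_congr rfl (fun c hc => rowSpin_row n m r c (Finset.mem_range.1 hc))

lemma adm_of_ones (L : ℝ) (n k : ℕ) (m : ℕ → ℕ)
    (h : onesOf n (Nat.floor (L * (n : ℝ) ^ 2)) m = k) :
    AdmDisc L n k (spinOf n (Nat.floor (L * (n : ℝ) ^ 2)) m) := by
  unfold AdmDisc
  generalize Nat.floor (L * (n : ℝ) ^ 2) = M at *
  refine ⟨?_, ?_, ?_⟩
  · intro i _
    unfold spinOf rowSpin
    split_ifs <;> simp
  · intro i hi
    unfold spinOf
    rw [if_neg]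
    simpa using hi
  · rw [← h, onesOf]
    symm
    apply Finset.card_bij (fun j _ => j + 1)
    · intro j hj
      simp only [Finset.mem_filter, Finset.mem_range] at hj
      rw [Finset.mem_filter, Finset.mem_Icc]
      simp only [spinOf, rowSpin]
      refine ⟨by omega, ?_⟩
      rw [if_pos (by omega), Nat.add_sub_cancel, if_pos hj.2]
    · intro a _ b _ hab
      omega
    · intro i hi
      rw [Finset.mem_filter, Finset.mem_Icc] at hi
      simp only [spinOf, rowSpin] at hi
      refine ⟨i - 1, ?_, by omega⟩
      simp only [Finset.mem_filter, Finset.mem_range]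
      refine ⟨by omega, ?_⟩
      by_contra hc
      rw [if_pos hi.1, if_neg hc] at hi
      norm_num at hi

/-- adjusted row counts: on the window `[s, s+K)` the total is `T`, almost equidistributed -/
def adjRows (K s T : ℕ) (m : ℕ → ℕ) (r : ℕ) : ℕ :=
  if s ≤ r ∧ r < s + K then T / K + (if r - s < T % K then 1 else 0) else m r

lemma adjRows_le (n K s T : ℕ) (m : ℕ → ℕ) (hm : ∀ r, m r ≤ n) (hK : 1 ≤ K) (hT : T ≤ K * n)
    (r : ℕ) : adjRows K s T m r ≤ n := by
  unfold adjRows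
  have h1 : T / K ≤ n := Nat.div_le_of_le_mul hT
  split_ifs with h h'
  · by_contra hc
    have h2 : T / K = n := by omega
    have h3 := Nat.div_add_mod T K
    rw [h2] at h3
    omega
  · omega
  · exact hm r

lemma adjRows_win (K s T : ℕ) (m : ℕ → ℕ) (i : ℕ) (hi : i < K) :
    adjRows K s T m (s + i) = T / K + (if i < T % K then 1 else 0) := by
  unfold adjRows
  rw [if_pos (by omega), Nat.add_sub_cancel_left]

lemma adjRows_out (K s T : ℕ) (m : ℕ → ℕ) (r : ℕ) (h : r < s ∨ s + K ≤ r) :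
    adjRows K s T m r = m r := by
  unfold adjRows
  rw [if_neg (by omega)]

lemma adjRows_sum (K s T : ℕ) (m : ℕ → ℕ) (hK : 1 ≤ K) :
    ∑ i ∈ Finset.range K, (adjRows K s T m (s + i) : ℝ) = T := by
  have h1 : ∀ i ∈ Finset.range K, (adjRows K s T m (s + i) : ℝ)
      = ((T / K : ℕ) : ℝ) + (if i < T % K then (1:ℝ) else 0) := by
    intro i hi
    rw [adjRows_win K s T m i (Finset.mem_range.1 hi)]
    push_cast
    rfl
  rw [Finset.sum_congr rfl h1, Finset.sum_add_distrib,
    sum_lt_indicator K (T % K) (Nat.mod_lt _ hK).le]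
  simp only [Finset.sum_const, Finset.card_range, nsmul_eq_mul]
  exact_mod_cast Nat.div_add_mod T K

lemma adjRows_ones (n M K s T : ℕ) (hn : 1 ≤ n) (m : ℕ → ℕ) (hm : ∀ r, m r ≤ n) (hK : 1 ≤ K)
    (hT : T ≤ K * n) (hs : s + K ≤ M / n) :
    (onesOf n M (adjRows K s T m) : ℝ)
      = onesOf n M m + T - ∑ i ∈ Finset.range K, (m (s + i) : ℝ) := by
  rw [onesOf_eq n M _ (adjRows_le n K s T m hm hK hT), onesOf_eq n M m hm]
  have h2 : ∑ c ∈ Finset.range (M % n), rowSpin n (adjRows K s T m) (M / n * n + c)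
      = ∑ c ∈ Finset.range (M % n), rowSpin n m (M / n * n + c) := by
    apply Finset.sum_congr rfl
    intro c hc
    have hc := Finset.mem_range.1 hc
    have hc' : c < n := hc.trans (Nat.mod_lt _ hn)
    rw [rowSpin_row _ _ _ _ hc', rowSpin_row _ _ _ _ hc', adjRows_out _ _ _ _ _ (Or.inr hs)]
  rw [h2]
  obtain ⟨p, hp⟩ : ∃ p, M / n = s + K + p := ⟨M / n - (s + K), by omega⟩
  rw [hp, Finset.sum_range_add, Finset.sum_range_add, Finset.sum_range_add, Finset.sum_range_add,
    adjRows_sum K s T m hK]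
  have h3 : ∑ x ∈ Finset.range s, (adjRows K s T m x : ℝ) = ∑ x ∈ Finset.range s, (m x : ℝ) := by
    apply Finset.sum_congr rfl
    intro c hc
    rw [adjRows_out _ _ _ _ _ (Or.inl (Finset.mem_range.1 hc))]
  have h4 : ∑ x ∈ Finset.range p, (adjRows K s T m (s + K + x) : ℝ)
      = ∑ x ∈ Finset.range p, (m (s + K + x) : ℝ) := by
    apply Finset.sum_congr rfl
    intro c hc
    rw [adjRows_out _ _ _ _ _ (Or.inr (by omega))]
  rw [h3, h4]
  ring

lemma avg_variation (K : ℕ) (hK : 1 ≤ K) (f : ℕ → ℝ) (c : ℝ)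
    (hc : K * c = ∑ i ∈ Finset.range K, f (1 + i)) :
    |f 0 - c| + |c - f (K + 1)| ≤ ∑ i ∈ Finset.range (K + 1), |f i - f (i + 1)| := by
  set W := ∑ i ∈ Finset.range (K + 1), |f i - f (i + 1)| with hW
  have hKpos : (0:ℝ) < K := by exact_mod_cast hK
  have key : ∀ i ∈ Finset.range K, |f 0 - f (1 + i)| + |f (1 + i) - f (K + 1)| ≤ W := by
    intro i hi
    have hi := Finset.mem_range.1 hi
    obtain ⟨p, hp⟩ : ∃ p, K + 1 = (1 + i) + p := ⟨K - i, by omega⟩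
    have h1 := dist_le_range_sum_dist f (1 + i)
    have h2 := dist_le_range_sum_dist (fun j => f (1 + i + j)) p
    simp only [Real.dist_eq, add_zero] at h1 h2
    rw [hW, hp, Finset.sum_range_add]
    simp only [← add_assoc] at h2 ⊢
    linarith
  have h1 : K * |f 0 - c| ≤ ∑ i ∈ Finset.range K, |f 0 - f (1 + i)| := by
    have : K * |f 0 - c| = |∑ i ∈ Finset.range K, (f 0 - f (1 + i))| := by
      rw [Finset.sum_sub_distrib, ← hc]
      simp only [Finset.sum_const, Finset.card_range, nsmul_eq_mul]
      rw [← mul_sub, abs_mul, abs_of_pos hKpos]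
    rw [this]
    exact Finset.abs_sum_le_sum_abs _ _
  have h2 : K * |c - f (K + 1)| ≤ ∑ i ∈ Finset.range K, |f (1 + i) - f (K + 1)| := by
    have : K * |c - f (K + 1)| = |∑ i ∈ Finset.range K, (f (1 + i) - f (K + 1))| := by
      rw [Finset.sum_sub_distrib, ← hc]
      simp only [Finset.sum_const, Finset.card_range, nsmul_eq_mul]
      rw [← mul_sub, abs_mul, abs_of_pos hKpos]
    rw [this]
    exact Finset.abs_sum_le_sum_abs _ _
  have h3 := Finset.sum_le_sum key
  rw [Finset.sum_add_distrib] at h3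
  simp only [Finset.sum_const, Finset.card_range, nsmul_eq_mul] at h3
  have : K * (|f 0 - c| + |c - f (K + 1)|) ≤ K * W := by linarith
  exact le_of_mul_le_mul_left this hKpos

lemma adjRows_near (K s T : ℕ) (m : ℕ → ℕ) (hK : 1 ≤ K) (i : ℕ) (hi : i < K) :
    |(adjRows K s T m (s + i) : ℝ) - T / K| ≤ 1 := by
  have hKpos : (0:ℝ) < K := by exact_mod_cast hK
  rw [adjRows_win K s T m i hi]
  have h1 : ((T / K : ℕ) : ℝ) ≤ T / K := Nat.cast_div_le
  have h2 : (T : ℝ) / K ≤ ((T / K : ℕ) : ℝ) + 1 := by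
    rw [div_le_iff₀ hKpos]
    have := Nat.lt_div_mul_add (a := T) (b := K) hK
    have h3 : (T:ℝ) < ((T / K : ℕ) : ℝ) * K + K := by exact_mod_cast this
    linarith
  rw [abs_le]
  push_cast
  split_ifs <;> constructor <;> linarith

lemma adjRows_cost (n N K s T : ℕ) (m : ℕ → ℕ) (hK : 1 ≤ K) (hs : 1 ≤ s) (hsK : s + K < N)
    (hT : |(T:ℝ) - ∑ i ∈ Finset.range K, (m (s + i) : ℝ)| ≤ (K:ℝ) ^ 2) :
    rowCost n N (adjRows K s T m) ≤ rowCost n N m + 11 * K := by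
  obtain ⟨s', rfl⟩ : ∃ s', s = s' + 1 := ⟨s - 1, by omega⟩
  obtain ⟨p, rfl⟩ : ∃ p, N = s' + (K + 1) + p := ⟨N - (s' + (K + 1)), by omega⟩
  have hKpos : (0:ℝ) < K := by exact_mod_cast hK
  have hK1 : (1:ℝ) ≤ K := by exact_mod_cast hK
  set a := adjRows K (s' + 1) T m with ha
  set A := ∑ i ∈ Finset.range K, (m (s' + 1 + i) : ℝ) with hA
  unfold rowCost
  rw [Finset.sum_range_add _ (s' + (K + 1)) p, Finset.sum_range_add _ (s' + (K + 1)) p,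
    Finset.sum_range_add _ s' (K + 1), Finset.sum_range_add _ s' (K + 1)]
  have hout : ∀ r, r < s' + 1 ∨ s' + 1 + K ≤ r → a r = m r := adjRows_out K (s' + 1) T m
  have e1 : ∀ r ∈ Finset.range s', (2 * (if 0 < a r ∧ a r < n then (1:ℝ) else 0)
    + (if a r ≠ a (r + 1) then (1:ℝ) else 0) + |(a r : ℝ) - a (r + 1)|) =
    (2 * (if 0 < m r ∧ m r < n then (1:ℝ) else 0)
    + (if m r ≠ m (r + 1) then (1:ℝ) else 0) + |(m r : ℝ) - m (r + 1)|) := by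
    intro r hr
    have hr := Finset.mem_range.1 hr
    rw [hout r (by omega), hout (r+1) (by omega)]
  have e2 : ∀ r ∈ Finset.range p, (2 * (if 0 < a (s' + (K+1) + r) ∧ a (s' + (K+1) + r) < n then (1:ℝ) else 0)
    + (if a (s' + (K+1) + r) ≠ a (s' + (K+1) + r + 1) then (1:ℝ) else 0)
      + |(a (s' + (K+1) + r) : ℝ) - a (s' + (K+1) + r + 1)|) =
    (2 * (if 0 < m (s' + (K+1) + r) ∧ m (s' + (K+1) + r) < n then (1:ℝ) else 0)
    + (if m (s' + (K+1) + r) ≠ m (s' + (K+1) + r + 1) then (1:ℝ) else 0)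
      + |(m (s' + (K+1) + r) : ℝ) - m (s' + (K+1) + r + 1)|) := by
    intro r hr
    rw [hout (s' + (K+1) + r) (by omega), hout (s' + (K+1) + r + 1) (by omega)]
  rw [Finset.sum_congr rfl e1, Finset.sum_congr rfl e2]
  set c := A / K with hc
  have hvar := avg_variation K hK (fun j => (m (s' + j) : ℝ)) c (by
    rw [hc, mul_div_cancel₀ _ hKpos.ne', hA]
    simp only [← add_assoc])
  have hlow : ∑ i ∈ Finset.range (K+1), |(m (s' + i) : ℝ) - m (s' + i + 1)| ≤
      ∑ x ∈ Finset.range (K+1), (2 * (if 0 < m (s' + x) ∧ m (s' + x) < n then (1:ℝ) else 0)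
    + (if m (s' + x) ≠ m (s' + x + 1) then (1:ℝ) else 0) + |(m (s' + x) : ℝ) - m (s' + x + 1)|) := by
    apply Finset.sum_le_sum
    intro x _
    split_ifs <;> linarith
  have hup : ∑ x ∈ Finset.range (K+1), (2 * (if 0 < a (s' + x) ∧ a (s' + x) < n then (1:ℝ) else 0)
    + (if a (s' + x) ≠ a (s' + x + 1) then (1:ℝ) else 0) + |(a (s' + x) : ℝ) - a (s' + x + 1)|) ≤
      3 * (K + 1) + ∑ i ∈ Finset.range (K+1), |(a (s' + i) : ℝ) - a (s' + i + 1)| := by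
    have : (3 * (K + 1) : ℝ) = ∑ i ∈ Finset.range (K+1), (3:ℝ) := by simp; ring
    rw [this, ← Finset.sum_add_distrib]
    apply Finset.sum_le_sum
    intro x _
    split_ifs <;> linarith
  have hd : |(T:ℝ) / K - c| ≤ K := by
    rw [hc, ← sub_div, abs_div, abs_of_pos hKpos, div_le_iff₀ hKpos]
    linarith [hT, sq (K:ℝ)]
  have hmid : ∑ i ∈ Finset.range (K+1), |(a (s' + i) : ℝ) - a (s' + i + 1)| ≤
      |(m s' : ℝ) - c| + |c - m (s' + (K + 1))| + 3 * K + 2 := by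
    obtain ⟨K', hK'⟩ : ∃ K', K = K' + 1 := ⟨K - 1, by omega⟩
    have hr : Finset.range (K + 1) = Finset.range (K' + 1 + 1) := by rw [hK']
    rw [hr, Finset.sum_range_succ, Finset.sum_range_succ']
    have n0 := adjRows_near K (s'+1) T m hK 0 (by omega)
    have n1 := adjRows_near K (s'+1) T m hK K' (by omega)
    rw [← ha] at n0 n1
    have b0 : |(a (s' + 0) : ℝ) - a (s' + 0 + 1)| ≤ |(m s' : ℝ) - c| + K + 1 := by
      rw [hout (s' + 0) (by omega)]
      simp only [add_zero] at n0 ⊢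
      rw [abs_le] at *
      have := le_abs_self ((m s' : ℝ) - c)
      have := neg_abs_le ((m s' : ℝ) - c)
      constructor <;> linarith [hd.1, hd.2, n0.1, n0.2]
    have b1 : |(a (s' + (K' + 1)) : ℝ) - a (s' + (K' + 1) + 1)| ≤
        |c - m (s' + (K + 1))| + K + 1 := by
      rw [hout (s' + (K' + 1) + 1) (by omega)]
      have i1 : s' + (K' + 1) + 1 = s' + (K + 1) := by omega
      have i2 : s' + 1 + K' = s' + (K' + 1) := by omega
      rw [i1]
      rw [i2] at n1
      rw [abs_le] at *
      have := le_abs_self (c - m (s' + (K + 1)))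
      have := neg_abs_le (c - m (s' + (K + 1)))
      constructor <;> linarith [hd.1, hd.2, n1.1, n1.2]
    have b2 : ∑ k ∈ Finset.range K', |(a (s' + (k + 1)) : ℝ) - a (s' + (k + 1) + 1)| ≤ K' := by
      have : (K' : ℝ) = ∑ i ∈ Finset.range K', (1:ℝ) := by simp
      rw [this]
      apply Finset.sum_le_sum
      intro k hk
      have hk := Finset.mem_range.1 hk
      have i1 : s' + (k + 1) = s' + 1 + k := by omega
      rw [i1, add_assoc (s' + 1), ha, adjRows_win _ _ _ _ _ (by omega), adjRows_win _ _ _ _ _ (by omega)]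
      push_cast
      rw [abs_le]
      split_ifs <;> constructor <;> linarith
    have : (K:ℝ) = K' + 1 := by rw [hK']; push_cast; rfl
    linarith
  simp only [add_zero, ← add_assoc s'] at hvar hmid hlow hup ⊢
  linarith

lemma window_exists (n K Q : ℕ) (m : ℕ → ℕ) (hm : ∀ r, m r ≤ n) (hK : 2 ≤ K) (hKn : 4 * K ≤ n)
    (hQ : 1 ≤ Q)
    (h1 : K * n + (K + Q) * K < ∑ r ∈ Finset.range (K + Q), m r)
    (h2 : ∑ r ∈ Finset.range (K + Q), m r + Q * K < Q * n) :
    ∃ s, 1 ≤ s ∧ s + K ≤ K + Q ∧ K ^ 2 ≤ ∑ i ∈ Finset.range K, m (s + i) ∧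
      ∑ i ∈ Finset.range K, m (s + i) + K ^ 2 ≤ K * n := by
  by_contra hcon
  push Not at hcon
  set A : ℕ → ℕ := fun t => ∑ i ∈ Finset.range K, m (t + 1 + i) with hA
  have hno : ∀ t, t < Q → K ^ 2 ≤ A t → K * n < A t + K ^ 2 := by
    intro t ht h
    exact hcon (t + 1) (by omega) (by omega) h
  have hstep1 : ∀ t, A (t + 1) ≤ A t + n := by
    intro t
    obtain ⟨k, rfl⟩ : ∃ k, K = k + 1 := ⟨K - 1, by omega⟩
    simp only [hA]
    rw [Finset.sum_range_succ, Finset.sum_range_succ' (fun i => m (t + 1 + i))]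
    have e : ∀ x, t + 1 + 1 + x = t + 1 + (x + 1) := by intro x; omega
    simp only [e]
    have := hm (t + 1 + (k + 1))
    omega
  have hstep2 : ∀ t, A t ≤ A (t + 1) + n := by
    intro t
    obtain ⟨k, rfl⟩ : ∃ k, K = k + 1 := ⟨K - 1, by omega⟩
    simp only [hA]
    rw [Finset.sum_range_succ (fun i => m (t + 1 + 1 + i)), Finset.sum_range_succ']
    have e : ∀ x, t + 1 + 1 + x = t + 1 + (x + 1) := by intro x; omega
    simp only [e]
    have := hm (t + 1 + 0)
    omega
  have hbig : 2 * K ^ 2 + n ≤ K * n := by nlinarith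
  have hsumA : ∑ t ∈ Finset.range Q, A t
      = ∑ i ∈ Finset.range K, ∑ t ∈ Finset.range Q, m (1 + i + t) := by
    simp only [hA]
    rw [Finset.sum_comm]
    refine Finset.sum_congr rfl fun i _ => Finset.sum_congr rfl fun t _ => ?_
    congr 1; omega
  set P := ∑ r ∈ Finset.range (K + Q), m r with hP
  have hinner : ∀ i ∈ Finset.range K, ∑ t ∈ Finset.range Q, m (1 + i + t) ≤ P ∧
      P ≤ ∑ t ∈ Finset.range Q, m (1 + i + t) + K * n := by
    intro i hi
    have hi := Finset.mem_range.1 hi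
    obtain ⟨p, hp⟩ : ∃ p, K = 1 + i + p := ⟨K - (1 + i), by omega⟩
    have e : K + Q = 1 + i + Q + p := by omega
    rw [hP, e, Finset.sum_range_add, Finset.sum_range_add]
    have u1 : ∑ x ∈ Finset.range (1 + i), m x ≤ (1 + i) * n := by
      have := Finset.sum_le_card_nsmul (Finset.range (1+i)) m n (fun x _ => hm x)
      simpa using this
    have u2 : ∑ x ∈ Finset.range p, m (1 + i + Q + x) ≤ p * n := by
      have := Finset.sum_le_card_nsmul (Finset.range p) (fun x => m (1 + i + Q + x)) n (fun x _ => hm _)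
      simpa using this
    have u3 : K * n = (1 + i) * n + p * n := by rw [hp]; ring
    constructor <;> omega
  have hup : ∑ t ∈ Finset.range Q, A t ≤ K * P := by
    rw [hsumA]
    have := Finset.sum_le_card_nsmul (Finset.range K) _ P (fun i hi => (hinner i hi).1)
    simpa using this
  have hlow : K * P ≤ ∑ t ∈ Finset.range Q, A t + K * (K * n) := by
    rw [hsumA]
    have := Finset.sum_le_sum (fun i hi => (hinner i hi).2)
    rw [Finset.sum_add_distrib] at this
    simpa using this
  by_cases h0 : A 0 < K ^ 2
  · have hall : ∀ t, t < Q → A t < K ^ 2 := by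
      intro t
      induction t with
      | zero => intro _; exact h0
      | succ t ih =>
        intro ht
        by_contra hc
        have := hno (t+1) ht (by omega)
        have := ih (by omega)
        have := hstep1 t
        omega
    have hs : ∑ t ∈ Finset.range Q, A t ≤ Q * K ^ 2 := by
      have := Finset.sum_le_card_nsmul (Finset.range Q) A (K ^ 2)
        (fun t ht => (hall t (Finset.mem_range.1 ht)).le)
      simpa using this
    have : K * P ≤ K * (K * n + (K + Q) * K) := by nlinarith
    have := Nat.le_of_mul_le_mul_left this (by omega)
    omega
  · have hall : ∀ t, t < Q → K * n < A t + K ^ 2 := by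
      intro t
      induction t with
      | zero => intro ht; exact hno 0 ht (by omega)
      | succ t ih =>
        intro ht
        have := ih (by omega)
        have := hstep2 t
        by_contra hc
        have : ¬ K ^ 2 ≤ A (t + 1) := fun h => hc (hno (t+1) ht h)
        omega
    have hs : Q * (K * n) ≤ ∑ t ∈ Finset.range Q, A t + Q * K ^ 2 := by
      have := Finset.card_nsmul_le_sum (Finset.range Q) (fun t => A t + K ^ 2) (K * n)
        (fun t ht => (hall t (Finset.mem_range.1 ht)).le)
      rw [Finset.sum_add_distrib] at this
      simpa using this
    have : K * (Q * n) ≤ K * (P + Q * K) := by nlinarith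
    have := Nat.le_of_mul_le_mul_left this (by omega)
    omega

/-- row density function -/
def rowDens (n : ℕ) (m : ℕ → ℕ) (x : ℝ) : ℝ := (m (⌈(n:ℝ) * x⌉₊ - 1) : ℝ) / n

lemma full_rows_bounds (L : ℝ) (hL : 0 < L) (n : ℕ) (hn : 1 ≤ n) :
    ((Nat.floor (L * (n : ℝ) ^ 2) / n : ℕ) : ℝ) ≤ L * n ∧
    L * n - 2 ≤ ((Nat.floor (L * (n : ℝ) ^ 2) / n : ℕ) : ℝ) := by
  have hn' : (1:ℝ) ≤ n := by exact_mod_cast hn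
  have hf1 : ((Nat.floor (L * (n : ℝ) ^ 2) : ℕ) : ℝ) ≤ L * (n : ℝ) ^ 2 :=
    Nat.floor_le (by positivity)
  have hf2 := Nat.lt_floor_add_one (L * (n : ℝ) ^ 2)
  set M := Nat.floor (L * (n : ℝ) ^ 2)
  have h1 : ((M / n : ℕ) : ℝ) * n ≤ M := by exact_mod_cast Nat.div_mul_le_self M n
  have h2 : (M : ℝ) < ((M / n : ℕ) : ℝ) * n + n := by
    exact_mod_cast Nat.lt_div_mul_add (a := M) (b := n) (by omega)
  have hpos : (0:ℝ) < n := by linarith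
  constructor
  · refine le_of_mul_le_mul_right ?_ hpos
    nlinarith
  · refine le_of_mul_le_mul_right ?_ hpos
    nlinarith

lemma rowDens_row (n : ℕ) (hn : 1 ≤ n) (m : ℕ → ℕ) (r : ℕ) (x : ℝ)
    (hx : x ∈ Set.Ioc ((r:ℝ) / n) ((r + 1 : ℕ) / n)) : rowDens n m x = m r / n := by
  have hpos : (0:ℝ) < n := by exact_mod_cast hn
  have h1 : ((r:ℕ):ℝ) < n * x := by
    have := hx.1; rw [div_lt_iff₀ hpos] at this; linarith
  have h2 : (n:ℝ) * x ≤ ((r+1:ℕ):ℝ) := by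
    have := hx.2; rw [le_div_iff₀ hpos] at this; linarith
  have : ⌈(n:ℝ) * x⌉₊ = r + 1 := by
    apply le_antisymm
    · exact Nat.ceil_le.2 h2
    · exact Nat.succ_le_of_lt (Nat.lt_ceil.2 h1)
  rw [rowDens, this, Nat.add_sub_cancel]

lemma stepFun_row (n M : ℕ) (hn : 1 ≤ n) (m : ℕ → ℕ) (r : ℕ) (hr : r < M / n) (x : ℝ)
    (hx : x ∈ Set.Ioc ((r:ℝ) / n) ((r + 1 : ℕ) / n)) :
    stepFun n (spinOf n M m) x
      = (Set.Ioc ((r:ℝ) / n) ((r:ℝ) / n + m r / (n:ℝ)^2)).indicator (fun _ => (1:ℝ)) x := by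
  have hpos : (0:ℝ) < n := by exact_mod_cast hn
  have h1 : ((r * n : ℕ):ℝ) < (n:ℝ) ^ 2 * x := by
    have := hx.1; rw [div_lt_iff₀ hpos] at this
    push_cast; nlinarith
  have h2 : (n:ℝ) ^ 2 * x ≤ (((r+1) * n : ℕ):ℝ) := by
    have := hx.2; rw [le_div_iff₀ hpos] at this
    push_cast at this ⊢; nlinarith
  have hM : (r + 1) * n ≤ M :=
    (Nat.mul_le_mul_right n (Nat.succ_le_of_lt hr)).trans (Nat.div_mul_le_self M n)
  have e : ⌈(n : ℝ) ^ 2 * x⌉.toNat = ⌈(n : ℝ) ^ 2 * x⌉₊ := rfl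
  have hi1 : r * n < ⌈(n : ℝ) ^ 2 * x⌉₊ := Nat.lt_ceil.2 h1
  have hi2 : ⌈(n : ℝ) ^ 2 * x⌉₊ ≤ (r + 1) * n := Nat.ceil_le.2 h2
  have hi3 : ⌈(n : ℝ) ^ 2 * x⌉₊ ≤ r * n + m r ↔ (n : ℝ) ^ 2 * x ≤ r * n + m r := by
    rw [Nat.ceil_le]; push_cast; rfl
  unfold stepFun
  rw [e]
  set i := ⌈(n : ℝ) ^ 2 * x⌉₊
  have hmul : (r + 1) * n = r * n + n := by ring
  have e2 : i - 1 = r * n + (i - 1 - r * n) := by omega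
  rw [spinOf, if_pos (by omega), e2, rowSpin_row _ _ _ _ (by omega)]
  have key : (i - 1 - r * n < m r) ↔ x ∈ Set.Ioc ((r:ℝ) / n) ((r:ℝ) / n + m r / (n:ℝ)^2) := by
    have : (i - 1 - r * n < m r) ↔ i ≤ r * n + m r := by omega
    rw [this, hi3, Set.mem_Ioc]
    have e3 : (r:ℝ) / n + m r / (n:ℝ)^2 = (r * n + m r) / (n:ℝ) ^ 2 := by
      field_simp
    rw [e3, le_div_iff₀ (by positivity)]
    constructor
    · intro h; exact ⟨hx.1, by linarith⟩
    · intro h; linarith [h.2]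
  by_cases h : i - 1 - r * n < m r
  · rw [if_pos h, Set.indicator_of_mem (key.1 h)]
  · rw [if_neg h, Set.indicator_of_notMem (fun h' => h (key.2 h'))]

lemma rowDens_meas (n : ℕ) (m : ℕ → ℕ) : Measurable (rowDens n m) := by
  unfold rowDens
  have h1 : Measurable (fun j : ℕ => (m (j - 1) : ℝ) / n) := Measurable.of_discrete
  exact h1.comp (Nat.measurable_ceil.comp (measurable_const.mul measurable_id))

lemma stepFun_meas (n : ℕ) (u : ℕ → ℝ) : Measurable (stepFun n u) := by
  unfold stepFun
  have h1 : Measurable u := Measurable.of_discrete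
  have h2 : Measurable (fun x : ℝ => ⌈(n:ℝ)^2 * x⌉₊) :=
    Nat.measurable_ceil.comp (measurable_const.mul measurable_id)
  exact h1.comp h2

lemma rowDens_bd (n : ℕ) (m : ℕ → ℕ) (hm : ∀ r, m r ≤ n) (x : ℝ) :
    0 ≤ rowDens n m x ∧ rowDens n m x ≤ 1 := by
  unfold rowDens
  refine ⟨by positivity, div_le_one_of_le₀ (by exact_mod_cast hm _) (by positivity)⟩

lemma stepFun_bd (n M : ℕ) (m : ℕ → ℕ) (x : ℝ) :
    0 ≤ stepFun n (spinOf n M m) x ∧ stepFun n (spinOf n M m) x ≤ 1 := by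
  unfold stepFun spinOf rowSpin
  split_ifs <;> norm_num

lemma diff_bd (n M : ℕ) (m : ℕ → ℕ) (hm : ∀ r, m r ≤ n) (x : ℝ) :
    |stepFun n (spinOf n M m) x - rowDens n m x| ≤ 1 := by
  have h1 := rowDens_bd n m hm x
  have h2 := stepFun_bd n M m x
  rw [abs_le]; constructor <;> linarith [h1.1, h1.2, h2.1, h2.2]

lemma rowDens_int (n : ℕ) (hn : 1 ≤ n) (m : ℕ → ℕ) (r : ℕ) :
    ∫ x in ((r:ℝ) / n)..((r + 1 : ℕ) / n), rowDens n m x = m r / (n:ℝ) ^ 2 := by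
  have hpos : (0:ℝ) < n := by exact_mod_cast hn
  have hle : (r:ℝ) / n ≤ ((r + 1 : ℕ):ℝ) / n := by gcongr; simp
  rw [intervalIntegral.integral_of_le hle,
    setIntegral_congr_fun measurableSet_Ioc (fun x hx => rowDens_row n hn m r x hx),
    ← intervalIntegral.integral_of_le hle]
  rw [intervalIntegral.integral_const, smul_eq_mul]
  push_cast
  field_simp
  ring

lemma stepFun_int (n M : ℕ) (hn : 1 ≤ n) (m : ℕ → ℕ) (hm : ∀ r, m r ≤ n) (r : ℕ)
    (hr : r < M / n) :
    ∫ x in ((r:ℝ) / n)..((r + 1 : ℕ) / n), stepFun n (spinOf n M m) x = m r / (n:ℝ) ^ 2 := by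
  have hpos : (0:ℝ) < n := by exact_mod_cast hn
  have hle : (r:ℝ) / n ≤ ((r + 1 : ℕ):ℝ) / n := by gcongr; simp
  rw [intervalIntegral.integral_of_le hle,
    setIntegral_congr_fun measurableSet_Ioc (fun x hx => stepFun_row n M hn m r hr x hx),
    setIntegral_indicator measurableSet_Ioc]
  have hsub : Set.Ioc ((r:ℝ) / n) ((r:ℝ) / n + m r / (n:ℝ)^2) ⊆
      Set.Ioc ((r:ℝ) / n) ((r + 1 : ℕ) / n) := by
    apply Set.Ioc_subset_Ioc_right
    have : (m r : ℝ) ≤ n := by exact_mod_cast hm r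
    push_cast
    rw [add_div]
    apply add_le_add_right
    rw [div_le_div_iff₀ (by positivity) hpos]
    nlinarith
  rw [Set.inter_eq_right.2 hsub]
  simp only [integral_const, smul_eq_mul, mul_one, measureReal_restrict_apply_univ]
  rw [Real.volume_real_Ioc_of_le (by simp; positivity)]
  ring

lemma bdd_intervalIntegrable (f : ℝ → ℝ) (hf : Measurable f) (C : ℝ) (hC : ∀ x, |f x| ≤ C)
    (a b : ℝ) : IntervalIntegrable f volume a b := by
  rw [intervalIntegrable_iff]
  exact Measure.integrableOn_of_bounded (M := C) (by simp) hf.aestronglyMeasurable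
    (Filter.Eventually.of_forall hC)

lemma row_test (n M : ℕ) (hn : 1 ≤ n) (m : ℕ → ℕ) (hm : ∀ r, m r ≤ n) (r : ℕ)
    (hr : r < M / n) (h : ℝ → ℝ) (hc : Continuous h) (C ω : ℝ) (hC : ∀ x, |h x| ≤ C)
    (hω : ∀ x ∈ Set.Ioc ((r:ℝ) / n) ((r + 1 : ℕ) / n), |h x - h ((r:ℝ)/n)| ≤ ω) :
    |∫ x in ((r:ℝ) / n)..((r + 1 : ℕ) / n),
      (stepFun n (spinOf n M m) x - rowDens n m x) * h x| ≤ ω / n := by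
  have hpos : (0:ℝ) < n := by exact_mod_cast hn
  have hle : (r:ℝ) / n ≤ ((r + 1 : ℕ):ℝ) / n := by gcongr; simp
  set D := fun x => stepFun n (spinOf n M m) x - rowDens n m x with hD
  have hDm : Measurable D := (stepFun_meas n _).sub (rowDens_meas n m)
  have hDb : ∀ x, |D x| ≤ 1 := diff_bd n M m hm
  have hD0 : ∫ x in ((r:ℝ) / n)..((r + 1 : ℕ) / n), D x * h ((r:ℝ)/n) = 0 := by
    rw [intervalIntegral.integral_mul_const, intervalIntegral.integral_sub,
      stepFun_int n M hn m hm r hr, rowDens_int n hn m r, sub_self, zero_mul]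
    · apply bdd_intervalIntegrable _ (stepFun_meas n _) 1
      intro x; rw [abs_le]; constructor <;> linarith [(stepFun_bd n M m x).1, (stepFun_bd n M m x).2]
    · apply bdd_intervalIntegrable _ (rowDens_meas n m) 1
      intro x; rw [abs_le]; constructor <;> linarith [(rowDens_bd n m hm x).1, (rowDens_bd n m hm x).2]
  have hC0 : 0 ≤ C := (abs_nonneg _).trans (hC 0)
  have i1 : IntervalIntegrable (fun x => D x * h x) volume ((r:ℝ)/n) ((r + 1 : ℕ) / n) := by
    apply bdd_intervalIntegrable _ (hDm.mul hc.measurable) C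
    intro x
    change |D x * h x| ≤ C
    rw [abs_mul]
    nlinarith [hDb x, hC x, abs_nonneg (D x), abs_nonneg (h x)]
  have i2 : IntervalIntegrable (fun x => D x * h ((r:ℝ)/n)) volume ((r:ℝ)/n) ((r + 1 : ℕ) / n) := by
    apply bdd_intervalIntegrable _ (hDm.mul measurable_const) C
    intro x
    change |D x * h ((r:ℝ)/n)| ≤ C
    rw [abs_mul]
    nlinarith [hDb x, hC ((r:ℝ)/n), abs_nonneg (D x), abs_nonneg (h ((r:ℝ)/n))]
  have e : ∫ x in ((r:ℝ) / n)..((r + 1 : ℕ) / n), D x * h x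
      = ∫ x in ((r:ℝ) / n)..((r + 1 : ℕ) / n), D x * (h x - h ((r:ℝ)/n)) := by
    have := intervalIntegral.integral_sub i1 i2
    rw [hD0, sub_zero] at this
    rw [← this]
    congr 1; ext x; ring
  have b := intervalIntegral.norm_integral_le_of_norm_le_const (a := (r:ℝ)/n)
    (b := ((r + 1 : ℕ):ℝ) / n) (C := ω) (f := fun x => D x * (h x - h ((r:ℝ)/n))) (by
      intro x hx
      rw [Set.uIoc_of_le hle] at hx
      rw [Real.norm_eq_abs, abs_mul]
      nlinarith [hDb x, hω x hx, abs_nonneg (D x), abs_nonneg (h x - h ((r:ℝ)/n))])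
  change |∫ x in ((r:ℝ) / n)..((r + 1 : ℕ) / n), D x * h x| ≤ _
  rw [e]
  refine b.trans (le_of_eq ?_)
  rw [abs_of_nonneg (by linarith)]
  push_cast
  ring

lemma weak_test (L : ℝ) (hL : 0 < L) (m : ℕ → ℕ → ℕ) (hm : ∀ n r, m n r ≤ n)
    (h : ℝ → ℝ) (hc : Continuous h) (hs : HasCompactSupport h) :
    Tendsto (fun n : ℕ => ∫ x in Set.Ioo 0 L,
      (stepFun n (spinOf n (Nat.floor (L * (n : ℝ) ^ 2)) (m n)) x - rowDens n (m n) x) * h x)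
      atTop (nhds 0) := by
  obtain ⟨C, hC⟩ := hc.bounded_above_of_compact_support hs
  have huc := hc.uniformContinuous_of_tendsto_cocompact
    (hs.is_zero_at_infty)
  have hC0 : 0 ≤ C := (norm_nonneg _).trans (hC 0)
  rw [Metric.tendsto_atTop]
  intro ε hε
  rw [Metric.uniformContinuous_iff] at huc
  obtain ⟨δ, hδ, hδ'⟩ := huc (ε / (2 * L)) (by positivity)
  obtain ⟨N, hN⟩ := exists_nat_gt (max (1 / δ) (4 * C / ε))
  refine ⟨N + 1, fun n hn => ?_⟩
  have hn1 : 1 ≤ n := by omega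
  have hpos : (0:ℝ) < n := by exact_mod_cast hn1
  have hNn : (N:ℝ) ≤ n := by exact_mod_cast (by omega : N ≤ n)
  have g1 : 1 / δ < n := (le_max_left _ _).trans_lt (hN.trans_le hNn)
  have g2 : 4 * C / ε < n := (le_max_right _ _).trans_lt (hN.trans_le hNn)
  obtain ⟨hR1, hR2⟩ := full_rows_bounds L hL n hn1
  set M := Nat.floor (L * (n : ℝ) ^ 2)
  set R := M / n with hR
  set D := fun x => stepFun n (spinOf n M (m n)) x - rowDens n (m n) x with hD
  have hDm : Measurable D := (stepFun_meas n _).sub (rowDens_meas n _)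
  have hDb : ∀ x, |D x| ≤ 1 := diff_bd n M _ (hm n)
  have hDh : ∀ x, |D x * h x| ≤ C := by
    intro x
    have := hC x
    rw [Real.norm_eq_abs] at this
    rw [abs_mul]
    nlinarith [hDb x, abs_nonneg (D x), abs_nonneg (h x)]
  have hii : ∀ a b, IntervalIntegrable (fun x => D x * h x) volume a b :=
    bdd_intervalIntegrable _ (hDm.mul hc.measurable) C hDh
  rw [Real.dist_eq, sub_zero]
  have e0 : ∫ x in Set.Ioo 0 L, D x * h x = ∫ x in (0:ℝ)..L, D x * h x := by
    rw [intervalIntegral.integral_of_le hL.le, integral_Ioc_eq_integral_Ioo]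
  have e1 : ∫ x in (0:ℝ)..L, D x * h x = (∫ x in (0:ℝ)..((R:ℝ)/n), D x * h x)
      + ∫ x in ((R:ℝ)/n)..L, D x * h x :=
    (intervalIntegral.integral_add_adjacent_intervals (hii _ _) (hii _ _)).symm
  have e2 : ∫ x in (0:ℝ)..((R:ℝ)/n), D x * h x = ∑ r ∈ Finset.range R,
      ∫ x in ((r:ℝ) / n)..((r + 1 : ℕ) / n), D x * h x := by
    have := intervalIntegral.sum_integral_adjacent_intervals (f := fun x => D x * h x)
      (μ := volume) (a := fun r : ℕ => (r:ℝ) / n) (n := R) (fun k _ => hii _ _)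
    rw [this]
    simp
  have b1 : |∑ r ∈ Finset.range R,
      ∫ x in ((r:ℝ) / n)..((r + 1 : ℕ) / n), D x * h x| ≤ ε / 2 := by
    refine (Finset.abs_sum_le_sum_abs _ _).trans ?_
    have : ∀ r ∈ Finset.range R, |∫ x in ((r:ℝ) / n)..((r + 1 : ℕ) / n), D x * h x|
        ≤ (ε / (2 * L)) / n := by
      intro r hr
      apply row_test n M hn1 (m n) (hm n) r (Finset.mem_range.1 hr) h hc C _ hC
      intro x hx
      apply le_of_lt
      rw [← Real.dist_eq]
      apply hδ'
      rw [Real.dist_eq, abs_of_nonneg (by linarith [hx.1])]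
      have := hx.2
      push_cast at this
      rw [add_div] at this
      have : 1 / (n:ℝ) < δ := by
        rw [div_lt_iff₀ hpos]; rw [div_lt_iff₀ hδ] at g1; linarith
      linarith
    refine (Finset.sum_le_sum this).trans ?_
    rw [Finset.sum_const, Finset.card_range, nsmul_eq_mul]
    rw [mul_div_assoc', div_le_iff₀ hpos, mul_div_assoc', div_le_iff₀ (by positivity)]
    nlinarith
  have hRL : (R:ℝ) / n ≤ L := by rw [div_le_iff₀ hpos]; linarith
  have b2 : |∫ x in ((R:ℝ)/n)..L, D x * h x| < ε / 2 := by
    have := intervalIntegral.norm_integral_le_of_norm_le_const (a := (R:ℝ)/n) (b := L) (C := C)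
      (f := fun x => D x * h x) (fun x _ => hDh x)
    rw [Real.norm_eq_abs] at this
    refine this.trans_lt ?_
    rw [abs_of_nonneg (by linarith)]
    have h3 : L - R / n ≤ 2 / n := by
      rw [sub_le_iff_le_add, ← add_div, le_div_iff₀ hpos]; linarith
    have h4 : C * (2 / n) < ε / 2 := by
      rw [mul_div_assoc', div_lt_iff₀ hpos]
      rw [div_lt_iff₀ hε] at g2
      linarith
    nlinarith
  change |∫ x in Set.Ioo 0 L, D x * h x| < ε
  rw [e0, e1, e2]
  have := abs_add_le (∑ r ∈ Finset.range R,
      ∫ x in ((r:ℝ) / n)..((r + 1 : ℕ) / n), D x * h x) (∫ x in ((R:ℝ)/n)..L, D x * h x)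
  linarith

lemma dens_tendsto (L : ℝ) (m : ℕ → ℕ → ℕ) (hm : ∀ n r, m n r ≤ n) (v : ℝ → ℝ)
    (hae : ∀ᵐ x ∂(volume.restrict (Set.Ioo 0 L)),
      Tendsto (fun n => rowDens n (m n) x) atTop (nhds (v x)))
    (g : ℝ → ℝ) (hg : IntegrableOn g (Set.Ioo 0 L) volume) :
    Tendsto (fun n => ∫ x in Set.Ioo 0 L, rowDens n (m n) x * g x) atTop
      (nhds (∫ x in Set.Ioo 0 L, v x * g x)) := by
  apply tendsto_integral_of_dominated_convergence (fun x => |g x|)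
  · intro n
    exact (rowDens_meas n (m n)).aestronglyMeasurable.mul hg.aestronglyMeasurable
  · exact hg.abs
  · intro n
    refine Filter.Eventually.of_forall fun x => ?_
    have := rowDens_bd n (m n) (hm n) x
    rw [Real.norm_eq_abs, abs_mul, abs_of_nonneg this.1]
    nlinarith [abs_nonneg (g x)]
  · filter_upwards [hae] with x hx
    exact hx.mul_const _

lemma weak_base (L : ℝ) (hL : 0 < L) (m : ℕ → ℕ → ℕ) (hm : ∀ n r, m n r ≤ n) (v : ℝ → ℝ)
    (hae : ∀ᵐ x ∂(volume.restrict (Set.Ioo 0 L)),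
      Tendsto (fun n => rowDens n (m n) x) atTop (nhds (v x))) :
    WeakStarTo (Set.Ioo 0 L)
      (fun n => stepFun n (spinOf n (Nat.floor (L * (n : ℝ) ^ 2)) (m n))) v := by
  intro g hg
  have h1 := dens_tendsto L m hm v hae g hg
  set D : ℕ → ℝ → ℝ := fun n x =>
    stepFun n (spinOf n (Nat.floor (L * (n : ℝ) ^ 2)) (m n)) x - rowDens n (m n) x with hD
  have hDm : ∀ n, Measurable (D n) := fun n => (stepFun_meas n _).sub (rowDens_meas n _)
  have hDb : ∀ n x, |D n x| ≤ 1 := fun n => diff_bd n _ _ (hm n)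
  have hDi : ∀ n (f : ℝ → ℝ), IntegrableOn f (Set.Ioo 0 L) volume →
      IntegrableOn (fun x => D n x * f x) (Set.Ioo 0 L) volume := by
    intro n f hf
    exact Integrable.bdd_mul (c := 1) hf (hDm n).aestronglyMeasurable
      (Filter.Eventually.of_forall (hDb n))
  have hVi : ∀ n (f : ℝ → ℝ), IntegrableOn f (Set.Ioo 0 L) volume →
      IntegrableOn (fun x => rowDens n (m n) x * f x) (Set.Ioo 0 L) volume := by
    intro n f hf
    refine Integrable.bdd_mul (c := 1) hf (rowDens_meas n _).aestronglyMeasurable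
      (Filter.Eventually.of_forall fun x => ?_)
    have := rowDens_bd n (m n) (hm n) x
    rw [Real.norm_eq_abs, abs_of_nonneg this.1]
    exact this.2
  have h2 : Tendsto (fun n => ∫ x in Set.Ioo 0 L, D n x * g x) atTop (nhds 0) := by
    rw [Metric.tendsto_atTop]
    intro ε hε
    obtain ⟨h, hs, hle, hc, hi⟩ :=
      Integrable.exists_hasCompactSupport_integral_sub_le hg (half_pos hε)
    have ht := weak_test L hL m hm h hc hs
    rw [Metric.tendsto_atTop] at ht
    obtain ⟨N, hN⟩ := ht (ε / 2) (half_pos hε)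
    refine ⟨N, fun n hn => ?_⟩
    have hb := hN n hn
    rw [Real.dist_eq, sub_zero] at hb ⊢
    have hgh : IntegrableOn (fun x => g x - h x) (Set.Ioo 0 L) volume := hg.sub hi
    have e : ∫ x in Set.Ioo 0 L, D n x * g x = (∫ x in Set.Ioo 0 L, D n x * h x)
        + ∫ x in Set.Ioo 0 L, D n x * (g x - h x) := by
      rw [← integral_add (hDi n h hi) (hDi n _ hgh)]
      congr 1; ext x; ring
    have b : |∫ x in Set.Ioo 0 L, D n x * (g x - h x)| ≤ ε / 2 := by
      refine le_trans ?_ hle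
      rw [← Real.norm_eq_abs]
      apply norm_integral_le_of_norm_le hgh.norm
      refine Filter.Eventually.of_forall fun x => ?_
      rw [Real.norm_eq_abs, abs_mul, Real.norm_eq_abs]
      nlinarith [hDb n x, abs_nonneg (g x - h x)]
    rw [e]
    exact (abs_add_le _ _).trans_lt (by linarith)
  have h3 := h2.add h1
  rw [zero_add] at h3
  refine h3.congr fun n => ?_
  rw [← integral_add (hDi n g hg) (hVi n g hg)]
  congr 1; ext x; simp only [hD]; ring

lemma good_offset (S : Set ℝ) (hS : MeasurableSet S) (w : ℝ) (hw : 0 < w) (B : ℕ) :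
    ∃ t ∈ Set.Ioo 0 w, (((Finset.range B).filter fun b : ℕ => (b:ℝ) * w + t ∈ S).card : ℝ≥0∞)
      * ENNReal.ofReal w ≤ volume S := by
  set f : ℝ → ℝ≥0∞ := fun t => ∑ b ∈ Finset.range B,
    ((fun t => (b:ℝ) * w + t) ⁻¹' S).indicator (fun _ => (1:ℝ≥0∞)) t with hf
  have hmeas : ∀ b : ℕ, MeasurableSet ((fun t : ℝ => (b:ℝ) * w + t) ⁻¹' S) := fun b =>
    (measurable_const.add measurable_id) hS
  have hfm : Measurable f :=
    Finset.measurable_fun_sum _ (fun b _ => measurable_const.indicator (hmeas b))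
  have hvol : volume (Set.Ioo 0 w) = ENNReal.ofReal w := by simp
  have hw0 : ENNReal.ofReal w ≠ 0 := by simpa using hw
  obtain ⟨t, ht, hle⟩ := exists_le_setLAverage (μ := volume) (s := Set.Ioo 0 w) (f := f)
    (by rw [hvol]; exact hw0) (by rw [hvol]; exact ENNReal.ofReal_ne_top) hfm.aemeasurable
  refine ⟨t, ht, ?_⟩
  have hft : f t = (((Finset.range B).filter fun b : ℕ => (b:ℝ) * w + t ∈ S).card : ℝ≥0∞) := by
    simp only [hf, Set.indicator_apply, Set.mem_preimage]
    rw [Finset.sum_boole]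
  rw [← hft]
  rw [setLAverage_eq, hvol] at hle
  have hint : ∫⁻ x in Set.Ioo 0 w, f x ≤ volume S := by
    rw [hf, lintegral_finsetSum _ (fun b _ => measurable_const.indicator (hmeas b))]
    have e : ∀ b ∈ Finset.range B, ∫⁻ x in Set.Ioo 0 w,
        ((fun t => (b:ℝ) * w + t) ⁻¹' S).indicator (fun _ => (1:ℝ≥0∞)) x
          = volume (S ∩ Set.Ioo ((b:ℝ) * w) ((b:ℝ) * w + w)) := by
      intro b _
      rw [lintegral_indicator (hmeas b), setLIntegral_const, one_mul,
        Measure.restrict_apply (hmeas b), ← measure_preimage_add volume ((b:ℝ) * w)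
          (S ∩ Set.Ioo ((b:ℝ) * w) ((b:ℝ) * w + w))]
      congr 1
      ext y
      simp
    rw [Finset.sum_congr rfl e, ← measure_biUnion_finset]
    · apply measure_mono
      simp
    · intro a _ b _ hab
      rw [Function.onFun, Set.disjoint_left]
      rintro y ⟨_, hy1, hy2⟩ ⟨_, hy3, hy4⟩
      apply hab
      have h1 : (a:ℝ) < b + 1 := by
        refine lt_of_mul_lt_mul_right ?_ hw.le
        linarith
      have h2 : (b:ℝ) < a + 1 := by
        refine lt_of_mul_lt_mul_right ?_ hw.le
        linarith
      have h1' : a < b + 1 := by exact_mod_cast h1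
      have h2' : b < a + 1 := by exact_mod_cast h2
      omega
    · intro b _
      exact hS.inter measurableSet_Ioo
  calc f t * ENNReal.ofReal w ≤ ((∫⁻ x in Set.Ioo 0 w, f x) / ENNReal.ofReal w) * ENNReal.ofReal w := by
        gcongr
    _ = ∫⁻ x in Set.Ioo 0 w, f x := ENNReal.div_mul_cancel hw0 ENNReal.ofReal_ne_top
    _ ≤ volume S := hint

lemma block_sum (q B : ℕ) (hq : 1 ≤ q) (h : ℕ → ℕ → ℝ) (h0 : ∀ b, h b b = 0) (N : ℕ) :
    ∑ r ∈ Finset.range N, h (min (r / q) (B - 1)) (min ((r + 1) / q) (B - 1))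
      = ∑ b ∈ Finset.range (min (N / q) (B - 1)), h b (b + 1) := by
  induction N with
  | zero => simp
  | succ N ih =>
    rw [Finset.sum_range_succ, ih, Nat.succ_div]
    split_ifs with hd
    · by_cases hc : N / q < B - 1
      · rw [min_eq_left hc.le, min_eq_left (by omega : N / q + 1 ≤ B - 1), Finset.sum_range_succ]
      · rw [min_eq_right (by omega : B - 1 ≤ N / q), min_eq_right (by omega : B - 1 ≤ N / q + 1), h0,
          add_zero]
    · rw [add_zero, h0, add_zero]

lemma floor_diff (a b : ℝ) (ha : 0 ≤ a) (hb : 0 ≤ b) :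
    |(⌊a⌋₊ : ℝ) - ⌊b⌋₊| ≤ |a - b| + 1 := by
  have h1 := Nat.floor_le ha
  have h2 := Nat.lt_floor_add_one a
  have h3 := Nat.floor_le hb
  have h4 := Nat.lt_floor_add_one b
  have h5 := le_abs_self (a - b)
  have h6 := neg_abs_le (a - b)
  rw [abs_le]
  constructor <;> linarith

lemma base_row (L : ℝ) (hL : 0 < L) (v : ℝ → ℝ)
    (hrange : ∀ x ∈ Set.Ioo 0 L, 0 ≤ v x ∧ v x ≤ 1)
    (hbv : BoundedVariationOn v (Set.Ioo 0 L)) (n q B R : ℕ) (hn : 1 ≤ n) (hq : 1 ≤ q) (hB : 1 ≤ B)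
    (hB1 : (B * q : ℝ) ≤ L * n) (hB2 : L * n < (B + 1) * q) (hR : (R:ℝ) ≤ L * n) :
    ∃ m : ℕ → ℕ, (∀ r, m r ≤ n) ∧
      rowCost n (R + 1) m ≤ 2 * (n * (volume {x ∈ Set.Ioo 0 L | 0 < v x ∧ v x < 1}).toReal + q)
        + n * (eVariationOn v (Set.Ioo 0 L)).toReal + 2 * B ∧
      ∀ r, r < B * q → ∃ y ∈ Set.Ioo 0 L, |y * n - r| ≤ q ∧ |(m r : ℝ) / n - v y| ≤ 1 / n := by
  have hpos : (0:ℝ) < n := by exact_mod_cast hn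
  have hqpos : (0:ℝ) < q := by exact_mod_cast hq
  set mix := {x ∈ Set.Ioo 0 L | 0 < v x ∧ v x < 1} with hmix
  set w : ℝ := q / n with hw
  have hwpos : 0 < w := by positivity
  have hwn : w * n = q := by rw [hw]; field_simp
  obtain ⟨t, ht, hcard⟩ := good_offset (toMeasurable volume mix) (measurableSet_toMeasurable _ _)
    w hwpos B
  rw [measure_toMeasurable] at hcard
  set x : ℕ → ℝ := fun b => b * w + t with hx
  have hxmem : ∀ b, b < B → x b ∈ Set.Ioo 0 L := by
    intro b hb
    have h1 : (b:ℝ) + 1 ≤ B := by exact_mod_cast hb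
    have h2 : (b + 1) * w ≤ L := by
      rw [hw, mul_div_assoc', div_le_iff₀ hpos]
      nlinarith
    refine ⟨by simp only [hx]; have := ht.1; positivity, ?_⟩
    simp only [hx]
    linarith [ht.2]
  have hmixfin : volume mix ≠ ⊤ := by
    have : volume mix ≤ volume (Set.Ioo 0 L) := measure_mono (fun y hy => hy.1)
    refine ne_top_of_le_ne_top ?_ this
    simp
  set mb : ℕ → ℕ := fun b => ⌊(n:ℝ) * v (x b)⌋₊ with hmb
  set G := (Finset.range B).filter fun b : ℕ => 0 < mb b ∧ mb b < n with hG
  have hGcard : (G.card : ℝ) * q ≤ n * (volume mix).toReal := by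
    have hsub : G ⊆ (Finset.range B).filter fun b : ℕ => (b:ℝ) * w + t ∈ toMeasurable volume mix := by
      intro b hb
      rw [hG, Finset.mem_filter] at hb
      rw [Finset.mem_filter]
      refine ⟨hb.1, subset_toMeasurable _ _ ?_⟩
      have hxb := hxmem b (Finset.mem_range.1 hb.1)
      have hr := hrange _ hxb
      refine ⟨hxb, ?_, ?_⟩
      · have := Nat.floor_pos.1 hb.2.1
        by_contra hc
        have : v (x b) = 0 := le_antisymm (not_lt.1 hc) hr.1
        simp [hmb, this] at hb
      · have := (Nat.floor_lt (by have := hr.1; positivity)).1 hb.2.2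
        change v (x b) < 1
        nlinarith
    have h1 : (G.card : ℝ≥0∞) * ENNReal.ofReal w ≤ volume mix := by
      refine le_trans ?_ hcard
      gcongr
    have h2 := ENNReal.toReal_mono hmixfin h1
    rw [ENNReal.toReal_mul, ENNReal.toReal_natCast, ENNReal.toReal_ofReal hwpos.le] at h2
    rw [← hwn]
    nlinarith
  refine ⟨fun r => mb (min (r / q) (B - 1)), ?_, ?_, ?_⟩
  · intro r
    have hr := hrange _ (hxmem (min (r / q) (B - 1)) (by omega))
    simp only [hmb]
    apply Nat.floor_le_of_le
    nlinarith [hr.2]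
  · unfold rowCost
    simp only [add_assoc]
    rw [Finset.sum_add_distrib]
    have hN : R + 1 ≤ B * q + q := by
      have : (R:ℝ) < ((B * q + q : ℕ) : ℝ) := by push_cast; linarith
      have : R < B * q + q := by exact_mod_cast this
      omega
    have s1 : ∑ r ∈ Finset.range (R + 1), 2 * (if 0 < mb (min (r / q) (B - 1)) ∧
        mb (min (r / q) (B - 1)) < n then (1:ℝ) else 0)
        ≤ 2 * (n * (volume mix).toReal + q) := by
      rw [← Finset.mul_sum]
      apply mul_le_mul_of_nonneg_left _ (by norm_num)
      have t1 : ∑ r ∈ Finset.range (R + 1), (if 0 < mb (min (r / q) (B - 1)) ∧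
        mb (min (r / q) (B - 1)) < n then (1:ℝ) else 0) ≤
          ∑ r ∈ Finset.range (B * q + q), (if 0 < mb (min (r / q) (B - 1)) ∧
        mb (min (r / q) (B - 1)) < n then (1:ℝ) else 0) := by
        apply Finset.sum_le_sum_of_subset_of_nonneg
        · exact Finset.range_mono hN
        · intro i _ _
          split_ifs <;> norm_num
      refine t1.trans ?_
      rw [Finset.sum_range_add, sum_rows]
      apply add_le_add
      · refine le_trans (le_of_eq ?_) hGcard
        have : ∀ b ∈ Finset.range B, ∑ c ∈ Finset.range q,
            (if 0 < mb (min ((b * q + c) / q) (B - 1)) ∧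
              mb (min ((b * q + c) / q) (B - 1)) < n then (1:ℝ) else 0)
            = (if 0 < mb b ∧ mb b < n then (1:ℝ) else 0) * q := by
          intro b hb
          have hb := Finset.mem_range.1 hb
          have : ∀ c ∈ Finset.range q, (if 0 < mb (min ((b * q + c) / q) (B - 1)) ∧
              mb (min ((b * q + c) / q) (B - 1)) < n then (1:ℝ) else 0)
              = (if 0 < mb b ∧ mb b < n then (1:ℝ) else 0) := by
            intro c hc
            have hc := Finset.mem_range.1 hc
            have h2 : (b * q + c) / q = b := by
              rw [add_comm, Nat.add_mul_div_right _ _ (by omega), Nat.div_eq_of_lt hc, zero_add]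
            rw [h2, min_eq_left (by omega)]
          rw [Finset.sum_congr rfl this, Finset.sum_const, Finset.card_range, nsmul_eq_mul, mul_comm]
        rw [Finset.sum_congr rfl this, ← Finset.sum_mul, Finset.sum_boole]
      · have : (q:ℝ) = ∑ c ∈ Finset.range q, (1:ℝ) := by simp
        conv_rhs => rw [this]
        apply Finset.sum_le_sum
        intro c _
        split_ifs <;> norm_num
    have s2 : ∑ r ∈ Finset.range (R + 1),
        ((if mb (min (r / q) (B - 1)) ≠ mb (min ((r + 1) / q) (B - 1)) then (1:ℝ) else 0)
          + |(mb (min (r / q) (B - 1)) : ℝ) - mb (min ((r + 1) / q) (B - 1))|)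
        ≤ n * (eVariationOn v (Set.Ioo 0 L)).toReal + 2 * B := by
      rw [block_sum q B hq (fun a b => (if mb a ≠ mb b then (1:ℝ) else 0)
          + |(mb a : ℝ) - mb b|) (by simp) (R + 1)]
      have t1 : ∑ b ∈ Finset.range (min ((R + 1) / q) (B - 1)),
          ((if mb b ≠ mb (b + 1) then (1:ℝ) else 0) + |(mb b : ℝ) - mb (b + 1)|)
          ≤ ∑ b ∈ Finset.range (B - 1),
          ((if mb b ≠ mb (b + 1) then (1:ℝ) else 0) + |(mb b : ℝ) - mb (b + 1)|) := by
        apply Finset.sum_le_sum_of_subset_of_nonneg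
        · exact Finset.range_mono (min_le_right _ _)
        · intro i _ _
          have := abs_nonneg ((mb i : ℝ) - mb (i + 1))
          split_ifs <;> linarith
      have t2 : ∑ b ∈ Finset.range (B - 1),
          ((if mb b ≠ mb (b + 1) then (1:ℝ) else 0) + |(mb b : ℝ) - mb (b + 1)|)
          ≤ ∑ b ∈ Finset.range (B - 1), (n * |v (x (b+1)) - v (x b)| + 2) := by
        apply Finset.sum_le_sum
        intro b hb
        have hb := Finset.mem_range.1 hb
        have r1 := hrange _ (hxmem b (by omega))
        have r2 := hrange _ (hxmem (b+1) (by omega))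
        have := floor_diff (n * v (x b)) (n * v (x (b+1))) (mul_nonneg hpos.le r1.1)
          (mul_nonneg hpos.le r2.1)
        rw [← mul_sub, abs_mul, abs_of_pos hpos, abs_sub_comm (v (x b))] at this
        simp only [hmb]
        split_ifs <;> linarith
      have t3 : ∑ b ∈ Finset.range (B - 1), |v (x (b+1)) - v (x b)|
          ≤ (eVariationOn v (Set.Ioo 0 L)).toReal := by
        have := eVariationOn.sum_le_of_monotoneOn_Iic (f := v) (s := Set.Ioo 0 L) (n := B - 1)
          (u := x) (by
            intro a _ b _ hab
            have : (a:ℝ) ≤ b := by exact_mod_cast hab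
            simp only [hx]
            nlinarith) (fun i hi => hxmem i (by omega))
        have h2 := ENNReal.toReal_mono hbv this
        rw [ENNReal.toReal_sum (fun b _ => edist_ne_top _ _)] at h2
        simpa only [edist_dist, Real.dist_eq, ENNReal.toReal_ofReal (abs_nonneg _)] using h2
      have t4 : ∑ b ∈ Finset.range (B - 1), (n * |v (x (b+1)) - v (x b)| + 2)
          = n * ∑ b ∈ Finset.range (B - 1), |v (x (b+1)) - v (x b)| + 2 * ((B - 1 : ℕ) : ℝ) := by
        rw [Finset.sum_add_distrib, ← Finset.mul_sum]
        simp only [Finset.sum_const, Finset.card_range, nsmul_eq_mul]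
        ring
      have t5 : ((B - 1 : ℕ) : ℝ) ≤ B := by exact_mod_cast Nat.sub_le B 1
      have := mul_le_mul_of_nonneg_left t3 hpos.le
      exact t1.trans (by linarith)
    exact add_le_add s1 s2
  · intro r hr
    have hb : r / q < B := Nat.div_lt_of_lt_mul (by rw [mul_comm]; exact hr)
    refine ⟨x (r / q), hxmem _ hb, ?_, ?_⟩
    · have h1 : (((r / q : ℕ) : ℝ)) * q ≤ r := by exact_mod_cast Nat.div_mul_le_self r q
      have h2 : (r:ℝ) < ((r / q : ℕ) : ℝ) * q + q := by
        exact_mod_cast Nat.lt_div_mul_add (a := r) (b := q) (by omega)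
      have h3 : x (r / q) * n = ((r / q : ℕ) : ℝ) * q + t * n := by
        simp only [hx]; rw [← hwn]; ring
      have h4 : 0 < t * n := mul_pos ht.1 hpos
      have h5 : t * n < q := by rw [← hwn]; exact mul_lt_mul_of_pos_right ht.2 hpos
      rw [h3, abs_le]
      constructor <;> linarith
    · simp only [min_eq_left (by omega : r / q ≤ B - 1), hmb]
      have hr' := hrange _ (hxmem _ hb)
      have h1 := Nat.floor_le (mul_nonneg hpos.le hr'.1)
      have h2 := Nat.lt_floor_add_one ((n:ℝ) * v (x (r / q)))
      have e : (⌊(n:ℝ) * v (x (r / q))⌋₊ : ℝ) / n - v (x (r / q))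
          = (⌊(n:ℝ) * v (x (r / q))⌋₊ - n * v (x (r / q))) / n := by field_simp
      rw [e, abs_div, abs_of_pos hpos]
      gcongr
      rw [abs_le]
      constructor <;> linarith

lemma ae_conv (L : ℝ) (v : ℝ → ℝ) (hbv : BoundedVariationOn v (Set.Ioo 0 L))
    (m : ℕ → ℕ → ℕ) (B q : ℕ → ℕ)
    (hq : Tendsto (fun n => (q n : ℝ) / n) atTop (nhds 0))
    (hB : ∀ᶠ n : ℕ in atTop, L * n < ((B n : ℝ) + 1) * q n)
    (h : ∀ᶠ n : ℕ in atTop, ∀ r, r < B n * q n → ∃ y ∈ Set.Ioo 0 L, |y * n - r| ≤ q n ∧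
      |(m n r : ℝ) / n - v y| ≤ 1 / n) :
    ∀ᵐ x ∂(volume.restrict (Set.Ioo 0 L)),
      Tendsto (fun n => rowDens n (m n) x) atTop (nhds (v x)) := by
  have hd := hbv.locallyBoundedVariationOn.ae_differentiableWithinAt measurableSet_Ioo
  filter_upwards [hd, ae_restrict_mem measurableSet_Ioo] with x hx hxm
  have hc : ContinuousAt v x := (hx.differentiableAt (isOpen_Ioo.mem_nhds hxm)).continuousAt
  rw [Metric.tendsto_atTop']
  intro ε hε
  obtain ⟨δ, hδ, hδ2⟩ := Metric.continuousAt_iff.1 hc (ε / 2) (by positivity)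
  have h1n : Tendsto (fun n : ℕ => 1 / (n:ℝ)) atTop (nhds 0) := tendsto_one_div_atTop_nhds_zero_nat
  have e1 : ∀ᶠ n : ℕ in atTop, (q n : ℝ) / n < min (δ / 2) (L - x) :=
    hq.eventually_lt_const (lt_min (by positivity) (by linarith [hxm.2]))
  have e2 : ∀ᶠ n : ℕ in atTop, 1 / (n:ℝ) < min (δ / 2) (ε / 2) :=
    h1n.eventually_lt_const (lt_min (by positivity) (by positivity))
  obtain ⟨N, hN⟩ := eventually_atTop.1
    ((((e1.and e2).and hB).and h).and (eventually_ge_atTop 1))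
  refine ⟨N, fun n hn => ?_⟩
  obtain ⟨⟨⟨⟨a1, a2⟩, a3⟩, a4⟩, a5⟩ := hN n hn.le
  have hpos : (0:ℝ) < n := by exact_mod_cast a5
  rw [lt_min_iff, div_lt_iff₀ hpos, div_lt_iff₀ hpos] at a1
  have a2' := lt_min_iff.1 a2
  rw [div_lt_iff₀ hpos] at a2'
  have hnx : 0 < (n:ℝ) * x := mul_pos hpos hxm.1
  have c1 := Nat.ceil_lt_add_one hnx.le
  have c2 := Nat.le_ceil ((n:ℝ) * x)
  have c3 : 1 ≤ ⌈(n:ℝ) * x⌉₊ := Nat.ceil_pos.2 hnx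
  set r := ⌈(n:ℝ) * x⌉₊ - 1 with hr
  have c4 : (⌈(n:ℝ) * x⌉₊ : ℝ) = r + 1 := by
    have : ⌈(n:ℝ) * x⌉₊ = r + 1 := by omega
    rw [this]; push_cast; rfl
  rw [c4] at c1 c2
  have hrB : r < B n * q n := by
    have : (r:ℝ) < ((B n * q n : ℕ) : ℝ) := by
      push_cast
      nlinarith [a1.2]
    exact_mod_cast this
  obtain ⟨y, hy, hy1, hy2⟩ := a4 r hrB
  have hyx : dist y x < δ := by
    rw [Real.dist_eq]
    have : |y - x| * n < δ * n := by
      have e : |y - x| * n = |y * n - x * n| := by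
        rw [← sub_mul, abs_mul, abs_of_pos hpos]
      rw [e]
      have := abs_le.1 hy1
      rw [abs_lt]
      constructor <;> nlinarith [a1.1, a2'.1]
    exact lt_of_mul_lt_mul_right this hpos.le
  have := hδ2 hyx
  have hh : rowDens n (m n) x = (m n r : ℝ) / n := rfl
  rw [hh]
  calc dist ((m n r : ℝ) / n) (v x) ≤ dist ((m n r : ℝ) / n) (v y) + dist (v y) (v x) :=
        dist_triangle _ _ _
    _ < ε / 2 + ε / 2 := by
        rw [Real.dist_eq ((m n r : ℝ) / n)]
        linarith [a2'.2]
    _ = ε := by ring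

lemma count_conv (L : ℝ) (hL : 0 < L) (m : ℕ → ℕ → ℕ) (hm : ∀ n r, m n r ≤ n) (v : ℝ → ℝ)
    (hae : ∀ᵐ x ∂(volume.restrict (Set.Ioo 0 L)),
      Tendsto (fun n => rowDens n (m n) x) atTop (nhds (v x))) :
    Tendsto (fun n : ℕ => (∑ r ∈ Finset.range (Nat.floor (L * (n : ℝ) ^ 2) / n), (m n r : ℝ))
      / (n:ℝ) ^ 2) atTop (nhds (∫ x in Set.Ioo 0 L, v x)) := by
  have h1 := dens_tendsto L m hm v hae (fun _ => 1) (by simp)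
  simp only [mul_one] at h1
  have h2 : Tendsto (fun n : ℕ => (∫ x in Set.Ioo 0 L, rowDens n (m n) x) -
      (∑ r ∈ Finset.range (Nat.floor (L * (n : ℝ) ^ 2) / n), (m n r : ℝ)) / (n:ℝ) ^ 2)
      atTop (nhds 0) := by
    have h2n : Tendsto (fun n : ℕ => 2 / (n:ℝ)) atTop (nhds 0) :=
      tendsto_const_div_atTop_nhds_zero_nat 2
    apply squeeze_zero_norm' _ h2n
    filter_upwards [eventually_ge_atTop 1] with n hn
    have hpos : (0:ℝ) < n := by exact_mod_cast hn
    obtain ⟨b1, b2⟩ := full_rows_bounds L hL n hn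
    set R := Nat.floor (L * (n : ℝ) ^ 2) / n
    have hbd : ∀ x, |rowDens n (m n) x| ≤ 1 := fun x => by
      have := rowDens_bd n (m n) (hm n) x
      rw [abs_of_nonneg this.1]; exact this.2
    have hi : ∀ a b, IntervalIntegrable (rowDens n (m n)) volume a b :=
      fun a b => bdd_intervalIntegrable _ (rowDens_meas n (m n)) 1 hbd a b
    have e1 : (∑ r ∈ Finset.range R, (m n r : ℝ)) / (n:ℝ) ^ 2
        = ∫ x in (0:ℝ)..((R:ℝ) / n), rowDens n (m n) x := by
      have := intervalIntegral.sum_integral_adjacent_intervals (f := rowDens n (m n))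
        (μ := volume) (a := fun r : ℕ => (r:ℝ) / n) (n := R) (fun k _ => hi _ _)
      simp only [Nat.cast_zero, zero_div] at this
      rw [← this, Finset.sum_div]
      exact Finset.sum_congr rfl (fun r _ => (rowDens_int n hn (m n) r).symm)
    have e2 : ∫ x in Set.Ioo 0 L, rowDens n (m n) x = ∫ x in (0:ℝ)..L, rowDens n (m n) x := by
      rw [intervalIntegral.integral_of_le hL.le, integral_Ioc_eq_integral_Ioo]
    rw [e1, e2, intervalIntegral.integral_interval_sub_left (hi _ _) (hi _ _)]
    have := intervalIntegral.norm_integral_le_of_norm_le_const (f := rowDens n (m n))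
      (a := (R:ℝ) / n) (b := L) (C := 1) (fun x _ => hbd x)
    refine this.trans ?_
    rw [one_mul, abs_le]
    have r1 : (R:ℝ) / n ≤ L := by rw [div_le_iff₀ hpos]; exact b1
    have r2 : L - 2 / n ≤ (R:ℝ) / n := by
      rw [le_div_iff₀ hpos, sub_mul, div_mul_cancel₀ _ hpos.ne']; exact b2
    have r3 : 0 < 2 / (n:ℝ) := by positivity
    constructor <;> linarith
  have := h1.sub h2
  simpa using this

lemma step_same (n M : ℕ) (hn : 1 ≤ n) (m m' : ℕ → ℕ) (s K : ℕ)
    (h : ∀ r, (r < s ∨ s + K ≤ r) → m' r = m r) (x : ℝ)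
    (hx : x ∉ Set.Ioc ((s:ℝ) / n) (((s + K : ℕ) : ℝ) / n)) :
    stepFun n (spinOf n M m') x = stepFun n (spinOf n M m) x := by
  have hpos : (0:ℝ) < n := by exact_mod_cast hn
  unfold stepFun spinOf
  split_ifs with hi
  · unfold rowSpin
    rw [h]
    by_contra hcon
    push Not at hcon
    apply hx
    set i := ⌈(n:ℝ) ^ 2 * x⌉.toNat with hidef
    have hi' : i = ⌈(n:ℝ) ^ 2 * x⌉₊ := rfl
    have g1 : s * n ≤ i - 1 := (Nat.le_div_iff_mul_le (by omega)).1 hcon.1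
    have g2 : i - 1 < (s + K) * n := (Nat.div_lt_iff_lt_mul (by omega)).1 hcon.2
    have g3 : s * n < i := by omega
    have g4 : i ≤ (s + K) * n := by omega
    rw [hi'] at g3 g4
    have k1 := Nat.lt_ceil.1 g3
    have k2 := Nat.ceil_le.1 g4
    push_cast at k1 k2
    constructor
    · rw [div_lt_iff₀ hpos]; nlinarith
    · rw [le_div_iff₀ hpos]; push_cast; nlinarith
  · rfl

lemma weak_adj (L : ℝ) (m m' : ℕ → ℕ → ℕ) (v : ℝ → ℝ) (s K : ℕ → ℕ)
    (hK : Tendsto (fun n => (K n : ℝ) / n) atTop (nhds 0))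
    (h : ∀ᶠ n : ℕ in atTop, ∀ r, (r < s n ∨ s n + K n ≤ r) → m' n r = m n r)
    (hw : WeakStarTo (Set.Ioo 0 L)
      (fun n => stepFun n (spinOf n (Nat.floor (L * (n : ℝ) ^ 2)) (m n))) v) :
    WeakStarTo (Set.Ioo 0 L)
      (fun n => stepFun n (spinOf n (Nat.floor (L * (n : ℝ) ^ 2)) (m' n))) v := by
  intro g hg
  have hb := hw g hg
  set J : ℕ → Set ℝ := fun n => Set.Ioc ((s n:ℝ) / n) (((s n + K n : ℕ) : ℝ) / n) with hJ
  have hJm : ∀ n, MeasurableSet (J n) := fun n => measurableSet_Ioc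
  have hJ0 : Tendsto (fun n => (volume.restrict (Set.Ioo 0 L)) (J n)) atTop (nhds 0) := by
    have : Tendsto (fun n => ENNReal.ofReal ((K n : ℝ) / n)) atTop (nhds 0) := by
      simpa using ENNReal.tendsto_ofReal hK
    refine tendsto_of_tendsto_of_tendsto_of_le_of_le tendsto_const_nhds this
      (fun _ => zero_le) (fun n => ?_)
    refine (Measure.restrict_apply_le _ _).trans ?_
    simp only [hJ, Real.volume_Ioc]
    apply le_of_eq
    congr 1
    push_cast
    ring
  have hz := hg.abs.tendsto_setIntegral_nhds_zero (l := atTop) (s := J) hJ0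
  have hint : ∀ n (m : ℕ → ℕ), Integrable (fun x => stepFun n (spinOf n (Nat.floor (L * (n : ℝ) ^ 2)) m) x
      * g x) (volume.restrict (Set.Ioo 0 L)) := by
    intro n m
    apply Integrable.bdd_mul (c := 1) hg
    · exact (stepFun_meas _ _).aestronglyMeasurable
    · filter_upwards with x
      have := stepFun_bd n (Nat.floor (L * (n : ℝ) ^ 2)) m x
      rw [Real.norm_eq_abs, abs_of_nonneg this.1]; exact this.2
  have hdiff : Tendsto (fun n : ℕ =>
      (∫ x in Set.Ioo 0 L, stepFun n (spinOf n (Nat.floor (L * (n : ℝ) ^ 2)) (m' n)) x * g x)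
      - ∫ x in Set.Ioo 0 L, stepFun n (spinOf n (Nat.floor (L * (n : ℝ) ^ 2)) (m n)) x * g x)
      atTop (nhds 0) := by
    apply squeeze_zero_norm' _ hz
    filter_upwards [h, eventually_ge_atTop 1] with n hn hn1
    rw [← integral_sub (hint n _) (hint n _), ← integral_indicator (hJm n)]
    apply norm_integral_le_of_norm_le
    · exact hg.abs.indicator (hJm n)
    · filter_upwards with x
      by_cases hx : x ∈ J n
      · rw [Set.indicator_of_mem hx, ← sub_mul, norm_mul, Real.norm_eq_abs, Real.norm_eq_abs]
        have h1 := stepFun_bd n (Nat.floor (L * (n : ℝ) ^ 2)) (m n) x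
        have h2 := stepFun_bd n (Nat.floor (L * (n : ℝ) ^ 2)) (m' n) x
        have : |stepFun n (spinOf n (Nat.floor (L * (n : ℝ) ^ 2)) (m' n)) x -
          stepFun n (spinOf n (Nat.floor (L * (n : ℝ) ^ 2)) (m n)) x| ≤ 1 := by
          rw [abs_le]; constructor <;> linarith [h1.1, h1.2, h2.1, h2.2]
        exact mul_le_of_le_one_left (abs_nonneg _) this
      · rw [Set.indicator_of_notMem hx, step_same n _ hn1 (m n) (m' n) (s n) (K n) hn x hx]
        simp
  have := hdiff.add hb
  simpa using this

/-- one scale: adjust the number of ones -/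
lemma fix_count (n M K k : ℕ) (hn : 1 ≤ n) (m : ℕ → ℕ) (hm : ∀ r, m r ≤ n) (hK : 2 ≤ K)
    (hKn : 4 * K ≤ n) (hd : |(k:ℝ) - onesOf n M m| ≤ (K:ℝ) ^ 2)
    (hR : K + 1 ≤ M / n)
    (h1 : (K * n + (M / n : ℕ) * K : ℝ) < ∑ r ∈ Finset.range (M / n), (m r : ℝ))
    (h2 : ∑ r ∈ Finset.range (M / n), (m r : ℝ) + ((M / n : ℕ) - K) * K
      < ((M / n : ℕ) - K) * n) :
    ∃ m' : ℕ → ℕ, ∃ s, (∀ r, m' r ≤ n) ∧ onesOf n M m' = k ∧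
      (∀ r, (r < s ∨ s + K ≤ r) → m' r = m r) ∧
      rowCost n (M / n + 1) m' ≤ rowCost n (M / n + 1) m + 11 * K := by
  obtain ⟨Q, hQ⟩ : ∃ Q, M / n = K + Q := ⟨M / n - K, by omega⟩
  rw [hQ] at h1 h2
  have hQ1 : 1 ≤ Q := by omega
  obtain ⟨s, hs1, hs2, hA1, hA2⟩ := window_exists n K Q m hm hK hKn hQ1
    (by push_cast at h1; exact_mod_cast h1) (by
      have : (((K + Q : ℕ) : ℝ) - K) = Q := by push_cast; ring
      rw [this] at h2
      exact_mod_cast h2)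
  set A := ∑ i ∈ Finset.range K, m (s + i) with hA
  have hd' := abs_le.1 hd
  have t0 : onesOf n M m ≤ A + k := by
    have : (onesOf n M m : ℝ) ≤ ((A + k : ℕ) : ℝ) := by
      have : ((K ^ 2 : ℕ) : ℝ) ≤ A := by exact_mod_cast hA1
      push_cast at this ⊢
      linarith [hd'.1]
    exact_mod_cast this
  obtain ⟨T, hT⟩ : ∃ T, T + onesOf n M m = A + k := ⟨A + k - onesOf n M m, by omega⟩
  have hTr : (T:ℝ) + onesOf n M m = A + k := by exact_mod_cast hT
  have hTn : T ≤ K * n := by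
    have : (T:ℝ) ≤ ((K * n : ℕ) : ℝ) := by
      have : ((A + K ^ 2 : ℕ) : ℝ) ≤ ((K * n : ℕ) : ℝ) := by exact_mod_cast hA2
      push_cast at this ⊢
      linarith [hd'.2]
    exact_mod_cast this
  have hAr : (A:ℝ) = ∑ i ∈ Finset.range K, (m (s + i) : ℝ) := by rw [hA]; push_cast; rfl
  refine ⟨adjRows K s T m, s, adjRows_le n K s T m hm (by omega) hTn, ?_,
    fun r hr => adjRows_out K s T m r hr, ?_⟩
  · have := adjRows_ones n M K s T hn m hm (by omega) hTn (by omega)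
    rw [← hAr] at this
    have : (onesOf n M (adjRows K s T m) : ℝ) = k := by linarith
    exact_mod_cast this
  · apply adjRows_cost n (M / n + 1) K s T m (by omega) hs1 (by omega)
    rw [← hAr]
    have : (T:ℝ) - A = k - onesOf n M m := by linarith
    rw [this]; exact hd

lemma sqrt_lim (f : ℕ → ℕ) (hf : Tendsto (fun n : ℕ => (f n : ℝ) / (n:ℝ) ^ 2) atTop (nhds 0)) :
    Tendsto (fun n : ℕ => (Nat.sqrt (f n) : ℝ) / n) atTop (nhds 0) := by
  have h1 : Tendsto (fun n : ℕ => Real.sqrt ((f n : ℝ) / (n:ℝ) ^ 2)) atTop (nhds 0) := by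
    simpa using hf.sqrt
  refine squeeze_zero (fun n => by positivity) (fun n => ?_) h1
  rw [Real.sqrt_div' _ (by positivity), Real.sqrt_sq (by positivity)]
  gcongr
  exact Real.nat_sqrt_le_real_sqrt

lemma rows_lim (L : ℝ) (hL : 0 < L) :
    Tendsto (fun n : ℕ => ((Nat.floor (L * (n : ℝ) ^ 2) / n : ℕ) : ℝ) / n) atTop (nhds L) := by
  have h2 : Tendsto (fun n : ℕ => L - 2 / (n:ℝ)) atTop (nhds L) := by
    simpa using tendsto_const_nhds.sub (tendsto_const_div_atTop_nhds_zero_nat (2:ℝ))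
  refine tendsto_of_tendsto_of_tendsto_of_le_of_le' h2 tendsto_const_nhds ?_ ?_
  · filter_upwards [eventually_ge_atTop 1] with n hn
    have hpos : (0:ℝ) < n := by exact_mod_cast hn
    rw [le_div_iff₀ hpos, sub_mul, div_mul_cancel₀ _ hpos.ne']
    exact (full_rows_bounds L hL n hn).2
  · filter_upwards [eventually_ge_atTop 1] with n hn
    have hpos : (0:ℝ) < n := by exact_mod_cast hn
    rw [div_le_iff₀ hpos]
    exact (full_rows_bounds L hL n hn).1

lemma onesOf_near (n M : ℕ) (hn : 1 ≤ n) (m : ℕ → ℕ) (hm : ∀ r, m r ≤ n) :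
    |(onesOf n M m : ℝ) - ∑ r ∈ Finset.range (M / n), (m r : ℝ)| ≤ n := by
  rw [onesOf_eq n M m hm, add_sub_cancel_left]
  have hb : ∀ j, 0 ≤ rowSpin n m j ∧ rowSpin n m j ≤ 1 := by
    intro j
    unfold rowSpin
    split_ifs <;> norm_num
  rw [abs_of_nonneg (Finset.sum_nonneg (fun c _ => (hb _).1))]
  refine (Finset.sum_le_sum (fun c _ => (hb _).2)).trans ?_
  simp only [Finset.sum_const, Finset.card_range, nsmul_eq_mul, mul_one]
  exact_mod_cast (Nat.mod_lt M (by omega)).le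

/-- Compatibility of the volume constraint: recovery sequence under an exact discrete
volume constraint. -/
theorem volume_constraint_recovery
    (L σ : ℝ) (hL : 0 < L) (hσ : σ ∈ Set.Ioo (0 : ℝ) 1)
    (k : ℕ → ℕ) (hk : ∀ n, k n ≤ Nat.floor (L * (n : ℝ) ^ 2))
    (hklim : Tendsto (fun n => (k n : ℝ) / (L * (n : ℝ) ^ 2)) atTop (nhds σ))
    (v : ℝ → ℝ)
    (hrange : ∀ x ∈ Set.Ioo 0 L, 0 ≤ v x ∧ v x ≤ 1)
    (hbv : BoundedVariationOn v (Set.Ioo 0 L))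
    (hint : (∫ x in Set.Ioo 0 L, v x) = σ * L) :
    ∃ u : ℕ → ℕ → ℝ, ∃ N : ℕ,
      (∀ n, N ≤ n → AdmDisc L n (k n) (u n)) ∧
      WeakStarTo (Set.Ioo 0 L) (fun n => stepFun n (u n)) v ∧
      Filter.limsup (fun n => ENNReal.ofReal (energyL L n (u n))) atTop ≤
        2 * volume {x ∈ Set.Ioo 0 L | 0 < v x ∧ v x < 1} +
          eVariationOn v (Set.Ioo 0 L) := by
  set mix := {x ∈ Set.Ioo 0 L | 0 < v x ∧ v x < 1} with hmix
  set V := eVariationOn v (Set.Ioo 0 L) with hV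
  have h1n : Tendsto (fun n : ℕ => 1 / (n:ℝ)) atTop (nhds 0) := tendsto_one_div_atTop_nhds_zero_nat
  set q : ℕ → ℕ := Nat.sqrt with hqdef
  set B : ℕ → ℕ := fun n => ⌊L * n / q n⌋₊ with hBdef
  set R : ℕ → ℕ := fun n => Nat.floor (L * (n : ℝ) ^ 2) / n with hRdef
  have hRlim : Tendsto (fun n : ℕ => (R n : ℝ) / n) atTop (nhds L) := rows_lim L hL
  have hqlim : Tendsto (fun n : ℕ => (q n : ℝ) / n) atTop (nhds 0) := by
    apply sqrt_lim (fun n => n)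
    refine h1n.congr' ?_
    filter_upwards [eventually_ge_atTop 1] with n hn
    have hpos : (0:ℝ) < n := by exact_mod_cast hn
    field_simp
  have hqtop : Tendsto q atTop atTop := by
    refine tendsto_atTop.2 (fun b => ?_)
    filter_upwards [eventually_ge_atTop (b * b)] with n hn
    exact Nat.le_sqrt.2 hn
  have hqR : Tendsto (fun n => (q n : ℝ)) atTop atTop := tendsto_natCast_atTop_atTop.comp hqtop
  have hBlim : Tendsto (fun n : ℕ => (B n : ℝ) / n) atTop (nhds 0) := by
    have hLq : Tendsto (fun n => L / (q n : ℝ)) atTop (nhds 0) := hqR.const_div_atTop L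
    refine squeeze_zero' (Eventually.of_forall fun n => by positivity) ?_ hLq
    filter_upwards [eventually_ge_atTop 1] with n hn
    have hpos : (0:ℝ) < n := by exact_mod_cast hn
    rw [div_le_iff₀ hpos]
    refine (Nat.floor_le (by positivity)).trans (le_of_eq ?_)
    ring
  have hC : ∀ᶠ n : ℕ in atTop, 1 ≤ n ∧ 1 ≤ q n ∧ 1 ≤ B n ∧ (B n * q n : ℝ) ≤ L * n ∧
      L * n < ((B n : ℝ) + 1) * q n ∧ (R n : ℝ) ≤ L * n := by
    filter_upwards [eventually_ge_atTop 1, hqtop.eventually_ge_atTop 1,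
      hqlim.eventually_lt_const hL] with n hn hq1 hqL
    have hpos : (0:ℝ) < n := by exact_mod_cast hn
    have hqpos : (0:ℝ) < q n := by exact_mod_cast hq1
    rw [div_lt_iff₀ hpos] at hqL
    refine ⟨hn, hq1, ?_, ?_, ?_, (full_rows_bounds L hL n hn).1⟩
    · apply Nat.le_floor
      rw [Nat.cast_one, le_div_iff₀ hqpos]
      linarith
    · rw [← le_div_iff₀ hqpos]
      exact Nat.floor_le (by positivity)
    · rw [← div_lt_iff₀ hqpos]
      exact Nat.lt_floor_add_one _
  -- the base row counts
  have hbase : ∀ n, ∃ m : ℕ → ℕ, (∀ r, m r ≤ n) ∧ ((1 ≤ n ∧ 1 ≤ q n ∧ 1 ≤ B n ∧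
      (B n * q n : ℝ) ≤ L * n ∧ L * n < ((B n : ℝ) + 1) * q n ∧ (R n : ℝ) ≤ L * n) →
      rowCost n (R n + 1) m ≤ 2 * (n * (volume mix).toReal + q n) + n * V.toReal + 2 * B n ∧
      ∀ r, r < B n * q n → ∃ y ∈ Set.Ioo 0 L, |y * n - r| ≤ q n ∧
        |(m r : ℝ) / n - v y| ≤ 1 / n) := by
    intro n
    by_cases hc : 1 ≤ n ∧ 1 ≤ q n ∧ 1 ≤ B n ∧
      (B n * q n : ℝ) ≤ L * n ∧ L * n < ((B n : ℝ) + 1) * q n ∧ (R n : ℝ) ≤ L * n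
    · obtain ⟨c1, c2, c3, c4, c5, c6⟩ := hc
      obtain ⟨m, p1, p2, p3⟩ := base_row L hL v hrange hbv n (q n) (B n) (R n) c1 c2 c3 c4 c5 c6
      exact ⟨m, p1, fun _ => ⟨p2, p3⟩⟩
    · exact ⟨fun _ => 0, fun _ => Nat.zero_le _, fun h => absurd h hc⟩
  choose m hm hmC using hbase
  have hae := ae_conv L v hbv m B q hqlim (hC.mono fun n h => h.2.2.2.2.1)
    (hC.mono fun n h => (hmC n h).2)
  have hwb := weak_base L hL m hm v hae
  have hP := count_conv L hL m hm v hae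
  rw [hint] at hP
  set P : ℕ → ℝ := fun n => ∑ r ∈ Finset.range (R n), (m n r : ℝ) with hPdef
  change Tendsto (fun n : ℕ => P n / (n:ℝ) ^ 2) atTop (nhds (σ * L)) at hP
  set O : ℕ → ℕ := fun n => onesOf n (Nat.floor (L * (n : ℝ) ^ 2)) (m n) with hOdef
  have hOP : Tendsto (fun n : ℕ => ((O n : ℝ) - P n) / (n:ℝ) ^ 2) atTop (nhds 0) := by
    apply squeeze_zero_norm' _ h1n
    filter_upwards [eventually_ge_atTop 1] with n hn
    have hpos : (0:ℝ) < n := by exact_mod_cast hn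
    have := onesOf_near n (Nat.floor (L * (n : ℝ) ^ 2)) hn (m n) (hm n)
    rw [Real.norm_eq_abs, abs_div, abs_of_pos (by positivity : (0:ℝ) < (n:ℝ) ^ 2),
      div_le_div_iff₀ (by positivity) hpos]
    change |(O n : ℝ) - P n| ≤ n at this
    nlinarith
  have hklim' : Tendsto (fun n => (k n : ℝ) / (n : ℝ) ^ 2) atTop (nhds (σ * L)) := by
    have := hklim.mul_const L
    refine this.congr (fun n => ?_)
    rw [div_mul_eq_mul_div, mul_comm L, mul_div_mul_right _ _ hL.ne']
  set d : ℕ → ℕ := fun n => ((k n : ℤ) - O n).natAbs with hddef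
  have hdr : ∀ n, (d n : ℝ) = |(k n : ℝ) - O n| := by
    intro n
    simp only [hddef, Nat.cast_natAbs]
    push_cast
    rfl
  have hdlim : Tendsto (fun n : ℕ => (d n : ℝ) / (n:ℝ) ^ 2) atTop (nhds 0) := by
    have := ((hklim'.sub hP).sub hOP).abs
    rw [sub_self, sub_zero, abs_zero] at this
    refine this.congr (fun n => ?_)
    rw [hdr, ← sub_div, ← sub_div, abs_div, abs_of_nonneg (by positivity : (0:ℝ) ≤ (n:ℝ) ^ 2)]
    congr 2
    ring
  set K : ℕ → ℕ := fun n => Nat.sqrt (d n) + 2 with hKdef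
  have hKlim : Tendsto (fun n : ℕ => (K n : ℝ) / n) atTop (nhds 0) := by
    have := (sqrt_lim d hdlim).add (tendsto_const_div_atTop_nhds_zero_nat (2:ℝ))
    rw [add_zero] at this
    refine this.congr (fun n => ?_)
    simp only [hKdef]
    push_cast
    ring
  have hKd : ∀ n, |(k n : ℝ) - O n| ≤ (K n : ℝ) ^ 2 := by
    intro n
    rw [← hdr]
    have h1 : d n < (Nat.sqrt (d n) + 1) * (Nat.sqrt (d n) + 1) := Nat.lt_succ_sqrt (d n)
    have h2 : d n ≤ K n ^ 2 := by
      simp only [hKdef]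
      nlinarith
    exact_mod_cast h2
  have hfix : ∀ n, ∃ m' : ℕ → ℕ, ∃ s : ℕ, ((1 ≤ n ∧ 4 * K n ≤ n ∧ K n + 1 ≤ R n ∧
      ((K n : ℝ) * n + R n * K n < P n) ∧ (P n + ((R n : ℝ) - K n) * K n < ((R n : ℝ) - K n) * n)) →
      (∀ r, m' r ≤ n) ∧ onesOf n (Nat.floor (L * (n : ℝ) ^ 2)) m' = k n ∧
      (∀ r, (r < s ∨ s + K n ≤ r) → m' r = m n r) ∧
      rowCost n (R n + 1) m' ≤ rowCost n (R n + 1) (m n) + 11 * K n) := by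
    intro n
    by_cases hc : 1 ≤ n ∧ 4 * K n ≤ n ∧ K n + 1 ≤ R n ∧
      ((K n : ℝ) * n + R n * K n < P n) ∧ (P n + ((R n : ℝ) - K n) * K n < ((R n : ℝ) - K n) * n)
    · obtain ⟨c1, c2, c3, c4, c5⟩ := hc
      obtain ⟨m', s, h⟩ := fix_count n (Nat.floor (L * (n : ℝ) ^ 2)) (K n) (k n) c1 (m n) (hm n)
        (by simp only [hKdef]; omega) c2 (hKd n) c3 c4 c5
      exact ⟨m', s, fun _ => h⟩
    · exact ⟨fun _ => 0, 0, fun h => absurd h hc⟩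
  choose m' s hm' using hfix
  have hD : ∀ᶠ n : ℕ in atTop, (1 ≤ n ∧ 4 * K n ≤ n ∧ K n + 1 ≤ R n ∧
      ((K n : ℝ) * n + R n * K n < P n) ∧
      (P n + ((R n : ℝ) - K n) * K n < ((R n : ℝ) - K n) * n)) := by
    have l1 : Tendsto (fun n : ℕ => (K n : ℝ) / n + (R n : ℝ) / n * ((K n : ℝ) / n)) atTop
        (nhds 0) := by
      have := hKlim.add (hRlim.mul hKlim)
      simpa using this
    have l2 : Tendsto (fun n : ℕ => P n / (n:ℝ) ^ 2 + ((R n : ℝ) / n - (K n : ℝ) / n) *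
        ((K n : ℝ) / n)) atTop (nhds (σ * L)) := by
      have := hP.add ((hRlim.sub hKlim).mul hKlim)
      simpa using this
    have l3 : Tendsto (fun n : ℕ => (R n : ℝ) / n - (K n : ℝ) / n) atTop (nhds L) := by
      simpa using hRlim.sub hKlim
    have l4 : Tendsto (fun n : ℕ => (R n : ℝ) / n - (K n : ℝ) / n - 1 / n) atTop (nhds L) := by
      simpa using l3.sub h1n
    have hσL : 0 < σ * L := mul_pos hσ.1 hL
    have hσL2 : σ * L < L := by nlinarith [hσ.2]
    filter_upwards [eventually_ge_atTop 1, hKlim.eventually_lt_const (by norm_num : (0:ℝ) < 1/4),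
      l1.eventually_lt hP hσL, l2.eventually_lt l3 hσL2, l4.eventually_const_lt hL]
      with n hn a1 a2 a3 a4
    have hpos : (0:ℝ) < n := by exact_mod_cast hn
    have hpos2 : (0:ℝ) < (n:ℝ) ^ 2 := by positivity
    refine ⟨hn, ?_, ?_, ?_, ?_⟩
    · rw [div_lt_iff₀ hpos] at a1
      have : ((4 * K n : ℕ) : ℝ) ≤ n := by push_cast; linarith
      exact_mod_cast this
    · rw [← sub_div, ← sub_div] at a4
      have := (div_pos_iff_of_pos_right hpos).1 a4
      have : ((K n + 1 : ℕ) : ℝ) ≤ R n := by push_cast; linarith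
      exact_mod_cast this
    · rw [lt_div_iff₀ hpos2] at a2
      refine lt_of_eq_of_lt ?_ a2
      field_simp
    · have := mul_lt_mul_of_pos_right a3 hpos2
      have e1 : (P n / (n:ℝ) ^ 2 + ((R n : ℝ) / n - (K n : ℝ) / n) * ((K n : ℝ) / n)) * (n:ℝ) ^ 2
          = P n + ((R n : ℝ) - K n) * K n := by
        rw [← sub_div]; field_simp
      have e2 : ((R n : ℝ) / n - (K n : ℝ) / n) * (n:ℝ) ^ 2 = ((R n : ℝ) - K n) * n := by
        rw [← sub_div]; field_simp
      rw [e1, e2] at this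
      exact this
  obtain ⟨N, hN⟩ := eventually_atTop.1 hD
  refine ⟨fun n => spinOf n (Nat.floor (L * (n : ℝ) ^ 2)) (m' n), N, ?_, ?_, ?_⟩
  · intro n hn
    exact adm_of_ones L n (k n) (m' n) (hm' n (hN n hn)).2.1
  · exact weak_adj L m m' v s K hKlim (hD.mono fun n h => (hm' n h).2.2.1) hwb
  · have hmixfin : volume mix ≠ ⊤ := by
      have : volume mix ≤ volume (Set.Ioo 0 L) := measure_mono (fun y hy => hy.1)
      refine ne_top_of_le_ne_top ?_ this
      simp
    have hrhs : 2 * volume mix + V = ENNReal.ofReal (2 * (volume mix).toReal + V.toReal) := by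
      rw [ENNReal.ofReal_add (by positivity) (by positivity), ENNReal.ofReal_mul (by norm_num),
        ENNReal.ofReal_toReal hmixfin, ENNReal.ofReal_toReal (show V ≠ ⊤ from hbv)]
      simp
    have hlim : Tendsto (fun n : ℕ => ENNReal.ofReal (2 * (volume mix).toReal + V.toReal +
        (2 * ((q n : ℝ) / n) + 2 * ((B n : ℝ) / n) + 11 * ((K n : ℝ) / n)))) atTop
        (nhds (ENNReal.ofReal (2 * (volume mix).toReal + V.toReal))) := by
      apply ENNReal.tendsto_ofReal
      have := ((hqlim.const_mul 2).add (hBlim.const_mul 2)).add (hKlim.const_mul 11)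
      have := this.const_add (2 * (volume mix).toReal + V.toReal)
      simpa using this
    rw [hrhs, ← hlim.limsup_eq]
    refine limsup_le_limsup ?_
    · filter_upwards [hC, hD] with n hc hd
      have hpos : (0:ℝ) < n := by exact_mod_cast hc.1
      apply ENNReal.ofReal_le_ofReal
      have h1 := hm' n hd
      refine (energy_le_cost L n hc.1 (m' n) h1.1).trans ?_
      have h2 := (hmC n hc).1
      have h3 : rowCost n (R n + 1) (m' n) ≤ 2 * (n * (volume mix).toReal + q n) + n * V.toReal
          + 2 * B n + 11 * K n := h1.2.2.2.trans (by linarith)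
      refine (mul_le_mul_of_nonneg_left h3 (by positivity)).trans (le_of_eq ?_)
      field_simp
      ring
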